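/- (Limits of finite-volume measures with tempered boundary conditions are regular Gibbs measures.) Let V be a countable set, let J be symmetric interactions satisfying the integrability condition with n = 2 (with f, δ_f, M_f), let β ≥ 0, and let ρ be a measure on ℝ with 0 < ∫_ℝ e^{a|u|²} dρ(u) < ∞ for all a > 0. Let (Λ_i)_{i≥1} be finite subsets of V with Λ_i ↗ V, let λ ≥ 1, and let ξ ∈ ℝ^V be boundary conditions for which there exists A_max ∈ [1,∞) such that for every x ∈ V and every C ≥ 1, limsup_{Λ↗V} A(x,Λ,λ,ξ,C) ≤ A_max. If the measures ν^ξ_{Λ_i,β,ρ,J} converge (in the sense that for every finite Λ' ⊂ V their Λ'-marginals converge weakly) to a probability measure ν on ℝ^V, then ν is an a-regular Gibbs measure for every a ≥ 2βM_fλ. -/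

import Mathlib

open MeasureTheory Filter
open scoped ENNReal Classical

/-- A walk of length `m` in `(R, J)`. -/
def IsWalk {V : Type*} (J : V → V → ℝ) (R : Set V) (m : ℕ) (w : ℕ → V) : Prop :=
  (∀ i, 0 < i → i < m → w i ∈ R) ∧ ∀ i < m, J (w i) (w (i + 1)) ≠ 0

/-- The quantity `A(x, R, λ, ξ, C)` (case `n = 2`). -/
noncomputable def ARealL {V : Type*} (J : V → V → ℝ) (f : ℝ → ℝ) (lam : ℝ)
    (ξ : V → ℝ) (C : ℝ) (x : V) (R : Set V) : ℝ :=
  sInf {A : ℝ | 1 ≤ A ∧ ∀ (m : ℕ) (w : ℕ → V), IsWalk J R m w → w 0 = x → w m ∈ R →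
    |∑' z : {z : V // z ∉ R}, J (w m) z.1 * ξ z.1| ≤
      (∑' z : {z : V // z ∉ R}, |J (w m) z.1| * f (J (w m) z.1)) * C * A * lam ^ (m + 1) *
        ∏ i ∈ Finset.range m, f (J (w i) (w (i + 1)))}

/-- The Hamiltonian `-H^ξ_{Λ,J}` (already multiplied by `β`). -/
noncomputable def hamil {V : Type*} (J : V → V → ℝ) (β : ℝ) (Λ : Finset V)
    (ξ : V → ℝ) (φ : ↥Λ → ℝ) : ℝ :=
  β * ((1 / 2) * ∑ x : ↥Λ, ∑ y : ↥Λ,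
      (if x.1 ≠ y.1 then J x.1 y.1 * φ x * φ y else 0)
    + ∑ x : ↥Λ, φ x * ∑' y : {y : V // y ∉ Λ}, J x.1 y.1 * ξ y.1)

/-- The finite-volume Gibbs measure `ν^ξ_{Λ,β,ρ,J}` on `ℝ^Λ`. -/
noncomputable def gibbs {V : Type*} (J : V → V → ℝ) (β : ℝ) (ρ : Measure ℝ)
    (Λ : Finset V) (ξ : V → ℝ) : Measure (↥Λ → ℝ) :=
  (((Measure.pi fun _ : ↥Λ => ρ).withDensity
      fun φ => ENNReal.ofReal (Real.exp (hamil J β Λ ξ φ))) Set.univ)⁻¹ •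
    (Measure.pi fun _ : ↥Λ => ρ).withDensity
      fun φ => ENNReal.ofReal (Real.exp (hamil J β Λ ξ φ))

/-- The `Λ'`-marginal of a measure on `ℝ^Λ`, for `Λ' ⊆ Λ`. -/
noncomputable def marg {V : Type*} {Λ' Λ : Finset V} (h : Λ' ⊆ Λ)
    (μ : Measure (↥Λ → ℝ)) : Measure (↥Λ' → ℝ) :=
  μ.map fun φ x => φ ⟨x.1, h x.2⟩

/-- The normalized product measure `ν^0_{Λ,0,ρ,0}`. -/
noncomputable def prodN {V : Type*} (ρ : Measure ℝ) (Λ : Finset V) :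
    Measure (↥Λ → ℝ) :=
  ((Measure.pi fun _ : ↥Λ => ρ) Set.univ)⁻¹ • Measure.pi fun _ : ↥Λ => ρ

/-- The tilted single-site measure `dρ_b(u) = e^(b|u|²) dρ(u)`. -/
noncomputable def rhoMod (ρ : Measure ℝ) (b : ℝ) : Measure ℝ :=
  ρ.withDensity fun u => ENNReal.ofReal (Real.exp (b * u ^ 2))

/-- Restriction of an infinite-volume configuration to a finite set of vertices. -/
def restrictTo {V : Type*} (Λ : Finset V) (φ : V → ℝ) : ↥Λ → ℝ := fun x => φ x.1

/-- A measure `ν` on `ℝ^V` is regular with respect to the single-site measure `ρa`: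
there is `B ∈ [0,∞)` such that for every finite `Λ` the `Λ`-marginal of `ν` has
density at most `e^{B|Λ|}` with respect to the normalized product of `ρa`. -/
def IsRegularWRT {V : Type*} (ρa : Measure ℝ) (ν : Measure (V → ℝ)) : Prop :=
  ∃ B : ℝ, 0 ≤ B ∧ ∀ Λ : Finset V,
    ν.map (restrictTo Λ) ≤ ENNReal.ofReal (Real.exp (B * Λ.card)) • prodN ρa Λ

/-- `ν` is a Gibbs measure: it satisfies the DLR equations. -/
def IsGibbsMeasure {V : Type*} (J : V → V → ℝ) (β : ℝ) (ρ : Measure ℝ)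
    (ν : Measure (V → ℝ)) : Prop :=
  ∀ (Λ : Finset V) (g : (↥Λ → ℝ) → ℝ), Measurable g → (∃ K, ∀ ψ, |g ψ| ≤ K) →
    ∫ φ, g (restrictTo Λ φ) ∂ν = ∫ η, ∫ ψ, g ψ ∂(gibbs J β ρ Λ η) ∂ν


/-! ### Product measure on `V → ℝ` and splicing -/

/-- Infinite product measure. -/
noncomputable def PP (V : Type*) (ρ : Measure ℝ) : Measure (V → ℝ) :=
  Measure.infinitePi (fun _ : V => ρ)

instance PP_prob {V : Type*} (ρ : Measure ℝ) [IsProbabilityMeasure ρ] :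
    IsProbabilityMeasure (PP V ρ) := by
  unfold PP; infer_instance

/-- `ψ` on `A`, `φ` off `A`. -/
noncomputable def spl {V : Type*} (A : Set V) (ψ φ : V → ℝ) : V → ℝ :=
  fun x => if x ∈ A then ψ x else φ x

lemma spl_of_mem {V : Type*} {A : Set V} {ψ φ : V → ℝ} {x : V} (h : x ∈ A) :
    spl A ψ φ x = ψ x := by simp [spl, h]

lemma spl_of_not_mem {V : Type*} {A : Set V} {ψ φ : V → ℝ} {x : V} (h : x ∉ A) :
    spl A ψ φ x = φ x := by simp [spl, h]

lemma measurable_spl {V : Type*} (A : Set V) :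
    Measurable (fun p : (V → ℝ) × (V → ℝ) => spl A p.1 p.2) := by
  rw [measurable_pi_iff]
  intro x
  by_cases h : x ∈ A
  · simp only [spl, h, if_true]; fun_prop
  · simp only [spl, h, if_false]; fun_prop

lemma spl_mp {V : Type*} (ρ : Measure ℝ) [IsProbabilityMeasure ρ] (A : Set V) :
    Measure.map (fun p : (V → ℝ) × (V → ℝ) => spl A p.1 p.2)
      ((PP V ρ).prod (PP V ρ)) = PP V ρ := by
  apply Measure.eq_infinitePi
  intro s t ht
  have hpi : MeasurableSet (Set.pi (s : Set V) t) :=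
    MeasurableSet.pi s.countable_toSet (fun i _ => ht i)
  rw [Measure.map_apply (measurable_spl A) hpi]
  have : (fun p : (V → ℝ) × (V → ℝ) => spl A p.1 p.2) ⁻¹' (Set.pi (s : Set V) t)
      = (Set.pi ((s.filter (· ∈ A) : Finset V) : Set V) t) ×ˢ
        (Set.pi ((s.filter (· ∉ A) : Finset V) : Set V) t) := by
    ext ⟨ψ, φ⟩
    simp only [Set.mem_preimage, Set.mem_pi, Finset.mem_coe, Set.mem_prod, Finset.mem_filter]
    constructor
    · intro h
      refine ⟨fun i hi => ?_, fun i hi => ?_⟩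
      · simpa [spl, hi.2] using h i hi.1
      · simpa [spl, hi.2] using h i hi.1
    · rintro ⟨h1, h2⟩ i hi
      by_cases hA : i ∈ A
      · simpa [spl, hA] using h1 i ⟨hi, hA⟩
      · simpa [spl, hA] using h2 i ⟨hi, hA⟩
  rw [this, Measure.prod_prod, PP, Measure.infinitePi_pi _ (fun i _ => ht i),
    Measure.infinitePi_pi _ (fun i _ => ht i), Finset.prod_filter_mul_prod_filter_not]

lemma lintegral_spl {V : Type*} (ρ : Measure ℝ) [IsProbabilityMeasure ρ] (A : Set V)
    (F : (V → ℝ) → ℝ≥0∞) (hF : Measurable F) :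
    ∫⁻ φ, F φ ∂(PP V ρ) = ∫⁻ φ, ∫⁻ ψ, F (spl A ψ φ) ∂(PP V ρ) ∂(PP V ρ) := by
  conv_lhs => rw [← spl_mp ρ A]
  rw [lintegral_map hF (measurable_spl A), lintegral_prod_symm']
  exact hF.comp (measurable_spl A)

lemma lintegral_indep {V : Type*} (ρ : Measure ℝ) [IsProbabilityMeasure ρ] (A : Set V)
    (F L : (V → ℝ) → ℝ≥0∞) (hF : Measurable F) (hL : Measurable L)
    (hFd : DependsOn F A) (hLd : DependsOn L Aᶜ) :
    ∫⁻ φ, F φ * L φ ∂(PP V ρ) = (∫⁻ φ, F φ ∂(PP V ρ)) * ∫⁻ φ, L φ ∂(PP V ρ) := by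
  rw [lintegral_spl ρ A (fun φ => F φ * L φ) (hF.mul hL)]
  have h1 : ∀ φ ψ, F (spl A ψ φ) = F ψ := fun φ ψ => hFd (fun i hi => spl_of_mem hi)
  have h2 : ∀ φ ψ, L (spl A ψ φ) = L φ := fun φ ψ => hLd (fun i hi => spl_of_not_mem hi)
  simp only [h1, h2]
  simp_rw [lintegral_mul_const _ hF]
  rw [lintegral_const_mul _ hL]

lemma lintegral_coord {V : Type*} (ρ : Measure ℝ) [IsProbabilityMeasure ρ] (x : V)
    (g : ℝ → ℝ≥0∞) (hg : Measurable g) :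
    ∫⁻ φ, g (φ x) ∂(PP V ρ) = ∫⁻ u, g u ∂ρ := by
  have := (measurePreserving_eval_infinitePi (fun _ : V => ρ) x)
  rw [PP, ← this.lintegral_comp hg]

lemma dependsOn_prod {V : Type*} (S : Finset V) (g : V → ℝ → ℝ≥0∞) :
    DependsOn (fun φ : V → ℝ => ∏ s ∈ S, g s (φ s)) (S : Set V) := by
  intro φ ψ h
  exact Finset.prod_congr rfl (fun s hs => by rw [h s hs])

lemma lintegral_coord_prod {V : Type*} (ρ : Measure ℝ) [IsProbabilityMeasure ρ] (S : Finset V)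
    (g : V → ℝ → ℝ≥0∞) (hg : ∀ s, Measurable (g s)) :
    ∫⁻ φ, ∏ s ∈ S, g s (φ s) ∂(PP V ρ) = ∏ s ∈ S, ∫⁻ u, g s u ∂ρ := by
  induction S using Finset.induction_on with
  | empty => simp
  | insert a S ha ih =>
    simp_rw [Finset.prod_insert ha]
    rw [lintegral_indep ρ {a} (fun φ => g a (φ a)) (fun φ => ∏ s ∈ S, g s (φ s)), ih,
      lintegral_coord ρ a (g a) (hg a)]
    · exact (hg a).comp (measurable_pi_apply a)
    · exact Finset.measurable_prod _ (fun s _ => (hg s).comp (measurable_pi_apply s))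
    · intro φ ψ h
      simp only
      rw [h a rfl]
    · intro φ ψ h
      refine Finset.prod_congr rfl (fun s hs => ?_)
      rw [h s (by simp; rintro rfl; exact ha hs)]


/-! ### Energies -/

/-- The Hamiltonian with a general external field, on `V → ℝ`. -/
noncomputable def HV {V : Type*} (J : V → V → ℝ) (β : ℝ) (Λ : Finset V)
    (h : V → ℝ) (φ : V → ℝ) : ℝ :=
  β * ((1 / 2) * ∑ x ∈ Λ, ∑ y ∈ Λ, (if x ≠ y then J x y * φ x * φ y else 0)
    + ∑ x ∈ Λ, φ x * h x)

/-- The boundary field. -/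
noncomputable def hb {V : Type*} (J : V → V → ℝ) (Λ : Finset V) (ξ : V → ℝ) (x : V) : ℝ :=
  ∑' y : {y : V // y ∉ Λ}, J x y.1 * ξ y.1

lemma hamil_eq {V : Type*} (J : V → V → ℝ) (β : ℝ) (Λ : Finset V) (ξ φ : V → ℝ) :
    hamil J β Λ ξ (restrictTo Λ φ) = HV J β Λ (hb J Λ ξ) φ := by
  unfold hamil HV hb restrictTo
  congr 2
  · congr 1
    rw [← Finset.sum_coe_sort Λ]
    refine Finset.sum_congr rfl (fun x _ => ?_)
    rw [← Finset.sum_coe_sort Λ]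
  · rw [← Finset.sum_coe_sort Λ]

lemma measurable_HV {V : Type*} (J : V → V → ℝ) (β : ℝ) (Λ : Finset V) (h : V → ℝ) :
    Measurable (HV J β Λ h) := by
  unfold HV
  refine Measurable.const_mul (Measurable.add (Measurable.const_mul ?_ _) ?_) _
  · refine Finset.measurable_sum _ (fun x _ => Finset.measurable_sum _ (fun y _ => ?_))
    by_cases hxy : x = y
    · simp [hxy]
    · simp only [ne_eq, hxy, not_false_eq_true, if_true]; fun_prop
  · fun_prop

lemma HV_congr {V : Type*} (J : V → V → ℝ) (β : ℝ) (Λ : Finset V) (h : V → ℝ) :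
    DependsOn (HV J β Λ h) (Λ : Set V) := by
  intro φ ψ hφ
  unfold HV
  congr 2
  · congr 1
    refine Finset.sum_congr rfl (fun x hx => Finset.sum_congr rfl (fun y hy => ?_))
    rw [hφ x hx, hφ y hy]
  · exact Finset.sum_congr rfl (fun x hx => by rw [hφ x hx])

lemma energy_diff {V : Type*} (J : V → V → ℝ) (f : ℝ → ℝ) (β lam Mf : ℝ)
    (hJsymm : ∀ x y, J x y = J y x) (hf1 : ∀ t, 1 ≤ f t) (hβ : 0 ≤ β) (hlam : 1 ≤ lam)
    (P U : Finset V) (hPU : Disjoint P U) (h χ m So : V → ℝ)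
    (hm : ∀ x ∈ P, |χ x| ≤ m x)
    (hU : ∀ x ∈ P, ∀ u ∈ U, J x u ≠ 0 → |χ u| ≤ lam * f (J x u) * m x)
    (hh : ∀ x ∈ P, |h x| ≤ So x * (lam * m x))
    (hS : ∀ x ∈ P, ∑ y ∈ P, |J x y| * f (J x y) + ∑ y ∈ U, |J x y| * f (J x y) + So x ≤ Mf) :
    |HV J β (P ∪ U) h χ - HV J β U h χ| ≤ β * (lam * Mf * ∑ x ∈ P, (m x) ^ 2) := by
  have hm0 : ∀ x ∈ P, 0 ≤ m x := fun x hx => (abs_nonneg _).trans (hm x hx)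
  have hl0 : 0 ≤ lam := by linarith
  set T : V → V → ℝ := fun x y => if x ≠ y then J x y * χ x * χ y else 0 with hT
  have hTabs : ∀ x y, |T x y| ≤ |J x y| * |χ x| * |χ y| := by
    intro x y
    simp only [hT]
    split_ifs
    · rw [abs_mul, abs_mul]
    · simp; positivity
  have hTsymm : ∀ x y, T x y = T y x := by
    intro x y
    simp only [hT]
    by_cases hxy : x = y
    · simp [hxy]
    · have : y ≠ x := fun h => hxy h.symm
      simp only [hxy, this, ne_eq, not_false_eq_true, if_true]
      rw [hJsymm x y]; ring
  have e1 : HV J β (P ∪ U) h χ - HV J β U h χ =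
      β * ((1/2) * ∑ x ∈ P, ∑ y ∈ P, T x y + ∑ x ∈ P, ∑ y ∈ U, T x y + ∑ x ∈ P, χ x * h x) := by
    have : ∑ x ∈ U, ∑ y ∈ P, T x y = ∑ x ∈ P, ∑ y ∈ U, T x y := by
      rw [Finset.sum_comm]
      exact Finset.sum_congr rfl (fun x _ => Finset.sum_congr rfl (fun y _ => hTsymm _ _))
    unfold HV
    simp only [Finset.sum_union hPU, Finset.sum_add_distrib]
    change β * (1 / 2 * (∑ x ∈ P, ∑ y ∈ P, T x y + ∑ x ∈ P, ∑ y ∈ U, T x y +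
      (∑ x ∈ U, ∑ y ∈ P, T x y + ∑ x ∈ U, ∑ y ∈ U, T x y)) + _) -
      β * (1 / 2 * (∑ x ∈ U, ∑ y ∈ U, T x y) + _) = _
    rw [this]; ring
  rw [e1, abs_mul, abs_of_nonneg hβ]
  refine mul_le_mul_of_nonneg_left ?_ hβ
  have b1 : |∑ x ∈ P, ∑ y ∈ P, T x y| ≤ ∑ x ∈ P, ∑ y ∈ P, |J x y| * (m x)^2 := by
    have s1 : |∑ x ∈ P, ∑ y ∈ P, T x y| ≤
        ∑ x ∈ P, ∑ y ∈ P, (|J x y| * (m x)^2 / 2 + |J y x| * (m y)^2 / 2) := by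
      refine (Finset.abs_sum_le_sum_abs _ _).trans (Finset.sum_le_sum (fun x hx => ?_))
      refine (Finset.abs_sum_le_sum_abs _ _).trans (Finset.sum_le_sum (fun y hy => ?_))
      refine (hTabs x y).trans ?_
      rw [hJsymm y x, mul_assoc]
      have : |χ x| * |χ y| ≤ m x * m y :=
        mul_le_mul (hm x hx) (hm y hy) (abs_nonneg _) (hm0 x hx)
      have h2 : |χ x| * |χ y| ≤ ((m x)^2 + (m y)^2)/2 := by nlinarith [sq_nonneg (m x - m y)]
      have := mul_le_mul_of_nonneg_left h2 (abs_nonneg (J x y))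
      linarith
    refine s1.trans (le_of_eq ?_)
    simp only [Finset.sum_add_distrib]
    rw [Finset.sum_comm (f := fun x y => |J y x| * (m y)^2 / 2)]
    rw [← Finset.sum_add_distrib]
    refine Finset.sum_congr rfl (fun x _ => ?_)
    rw [← Finset.sum_add_distrib]
    exact Finset.sum_congr rfl (fun y _ => by ring)
  have b2 : |∑ x ∈ P, ∑ y ∈ U, T x y| ≤
      ∑ x ∈ P, ∑ y ∈ U, |J x y| * f (J x y) * (lam * (m x)^2) := by
    refine (Finset.abs_sum_le_sum_abs _ _).trans (Finset.sum_le_sum (fun x hx => ?_))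
    refine (Finset.abs_sum_le_sum_abs _ _).trans (Finset.sum_le_sum (fun y hy => ?_))
    refine (hTabs x y).trans ?_
    by_cases hJ : J x y = 0
    · simp [hJ]
    have h1 := hU x hx y hy hJ
    have h2 : |χ x| * |χ y| ≤ m x * (lam * f (J x y) * m x) :=
      mul_le_mul (hm x hx) h1 (abs_nonneg _) (hm0 x hx)
    have := mul_le_mul_of_nonneg_left h2 (abs_nonneg (J x y))
    calc |J x y| * |χ x| * |χ y| = |J x y| * (|χ x| * |χ y|) := by ring
      _ ≤ _ := this
      _ = _ := by ring
  have b3 : |∑ x ∈ P, χ x * h x| ≤ ∑ x ∈ P, So x * (lam * (m x)^2) := by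
    refine (Finset.abs_sum_le_sum_abs _ _).trans (Finset.sum_le_sum (fun x hx => ?_))
    rw [abs_mul]
    calc |χ x| * |h x| ≤ m x * (So x * (lam * m x)) :=
          mul_le_mul (hm x hx) (hh x hx) (abs_nonneg _) (hm0 x hx)
      _ = _ := by ring
  have b1' : ∑ x ∈ P, ∑ y ∈ P, |J x y| * (m x)^2 ≤
      ∑ x ∈ P, ∑ y ∈ P, |J x y| * f (J x y) * (lam * (m x)^2) := by
    refine Finset.sum_le_sum (fun x hx => Finset.sum_le_sum (fun y hy => ?_))
    have : 1 ≤ f (J x y) * lam := one_le_mul_of_one_le_of_one_le (hf1 _) hlam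
    have h3 : 0 ≤ |J x y| * (m x)^2 := by positivity
    nlinarith
  have b0 : 0 ≤ ∑ x ∈ P, ∑ y ∈ P, |J x y| * (m x)^2 :=
    Finset.sum_nonneg (fun x _ => Finset.sum_nonneg (fun y _ => by positivity))
  have fin : ∑ x ∈ P, ∑ y ∈ P, |J x y| * f (J x y) * (lam * (m x)^2) +
      ∑ x ∈ P, ∑ y ∈ U, |J x y| * f (J x y) * (lam * (m x)^2) +
      ∑ x ∈ P, So x * (lam * (m x)^2) ≤ lam * Mf * ∑ x ∈ P, (m x) ^ 2 := by
    rw [← Finset.sum_add_distrib, ← Finset.sum_add_distrib, Finset.mul_sum]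
    refine Finset.sum_le_sum (fun x hx => ?_)
    rw [← Finset.sum_mul, ← Finset.sum_mul, ← add_mul, ← add_mul]
    have : 0 ≤ lam * (m x)^2 := by positivity
    nlinarith [hS x hx]
  have t1 := abs_add_le ((1/2) * ∑ x ∈ P, ∑ y ∈ P, T x y + ∑ x ∈ P, ∑ y ∈ U, T x y)
    (∑ x ∈ P, χ x * h x)
  have t2 := abs_add_le ((1/2) * ∑ x ∈ P, ∑ y ∈ P, T x y) (∑ x ∈ P, ∑ y ∈ U, T x y)
  have t3 : |(1/2) * ∑ x ∈ P, ∑ y ∈ P, T x y| = (1/2) * |∑ x ∈ P, ∑ y ∈ P, T x y| := by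
    rw [abs_mul]; norm_num
  linarith


/-! ### The exploration argument -/

/-- Vertices reachable from `Δ` by a walk in `Λ`, with accumulated level. -/
inductive Reach {V : Type*} (J : V → V → ℝ) (f : ℝ → ℝ) (lam : ℝ) (Λ Δ : Finset V) (K : ℝ) :
    V → ℝ → Prop
  | root {z : V} : z ∈ Δ → Reach J f lam Λ Δ K z K
  | step {z y : V} {r : ℝ} : Reach J f lam Λ Δ K z r → y ∈ Λ → J z y ≠ 0 →
      Reach J f lam Λ Δ K y (lam * f (J z y) * r)

/-- Data for the exploration. -/
structure Ctx (V : Type*) where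
  J : V → V → ℝ
  f : ℝ → ℝ
  β : ℝ
  lam : ℝ
  Mf : ℝ
  ρ : Measure ℝ
  Λ : Finset V
  Δ : Finset V
  h : V → ℝ
  So : V → ℝ
  K : ℝ
  M : ℝ
  v : V → V → ℝ

/-- The constant `2 β λ M_f`. -/
def Ctx.a0 {V : Type*} (X : Ctx V) : ℝ := 2 * X.β * X.Mf * X.lam

/-- Single-site weight. -/
noncomputable def Ctx.k {V : Type*} (X : Ctx V) (u : ℝ) : ℝ≥0∞ :=
  ENNReal.ofReal (Real.exp (X.a0 * (max |u| X.K) ^ 2)) * (X.ρ {u | |u| ≤ X.M})⁻¹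

/-- Indicator that a child is large. -/
noncomputable def Ctx.T {V : Type*} (X : Ctx V) (x s : V) (u : ℝ) : ℝ≥0∞ :=
  if X.J x s ≠ 0 ∧ X.f (X.J x s) * X.K < |u| then 1 else 0

/-- Boltzmann weight. -/
noncomputable def Ctx.w {V : Type*} (X : Ctx V) (φ : V → ℝ) : ℝ≥0∞ :=
  ENNReal.ofReal (Real.exp (HV X.J X.β X.Λ X.h φ))

/-- The exploration event. -/
def Ctx.Q {V : Type*} (X : Ctx V) (P E U : Finset V) (r : V → ℝ) : Set (V → ℝ) :=
  {φ | (∀ z ∈ E, r z ≤ max |φ z| X.K) ∧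
    ∀ z ∈ P, ∀ u ∈ U, X.J z u ≠ 0 → |φ u| ≤ X.lam * X.f (X.J z u) * max |φ z| X.K}

/-- The assumptions. -/
structure Ctx.Good {V : Type*} (X : Ctx V) : Prop where
  prob : IsProbabilityMeasure X.ρ
  hJsymm : ∀ x y, X.J x y = X.J y x
  hf1 : ∀ t, 1 ≤ X.f t
  hβ : 0 ≤ X.β
  hlam : 1 ≤ X.lam
  hM : 0 ≤ X.M
  hMK : X.M ≤ X.K
  hc : X.ρ {u | |u| ≤ X.M} ≠ 0
  hSo : ∀ x, 0 ≤ X.So x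
  hS : ∀ x ∈ X.Λ, ∑ y ∈ X.Λ, |X.J x y| * X.f (X.J x y) + X.So x ≤ X.Mf
  hfield : ∀ z r, Reach X.J X.f X.lam X.Λ X.Δ X.K z r → |X.h z| ≤ X.So z * (X.lam * r)
  hv0 : ∀ x s, 0 ≤ X.v x s
  hvS : ∀ x (S : Finset V), ∑ s ∈ S, X.v x s ≤ 1 / 4
  hw : ∀ x s, ∫⁻ u, X.k u * X.T x s u ∂X.ρ ≤ ENNReal.ofReal (X.v x s)

lemma Ctx.measurable_k {V : Type*} (X : Ctx V) : Measurable X.k := by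
  unfold Ctx.k; fun_prop

lemma Ctx.measurable_T {V : Type*} (X : Ctx V) (x s : V) : Measurable (X.T x s) := by
  unfold Ctx.T
  by_cases hJ : X.J x s = 0
  · simp [hJ]
  · simp only [ne_eq, hJ, not_false_eq_true, true_and]
    refine Measurable.ite (measurableSet_lt (by fun_prop) (by fun_prop)) (by fun_prop) (by fun_prop)

lemma Ctx.measurable_w {V : Type*} (X : Ctx V) : Measurable X.w := by
  unfold Ctx.w
  exact (Real.measurable_exp.comp (measurable_HV _ _ _ _)).ennreal_ofReal

lemma Ctx.measurableSet_Q {V : Type*} (X : Ctx V) (P E U : Finset V) (r : V → ℝ) :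
    MeasurableSet (X.Q P E U r) := by
  unfold Ctx.Q
  apply MeasurableSet.inter
  · have : {φ : V → ℝ | ∀ z ∈ E, r z ≤ max |φ z| X.K} =
        ⋂ z ∈ E, {φ : V → ℝ | r z ≤ max |φ z| X.K} := by ext; simp
    change MeasurableSet {φ : V → ℝ | ∀ z ∈ E, r z ≤ max |φ z| X.K}
    rw [this]
    refine Finset.measurableSet_biInter _ (fun z _ => measurableSet_le (by fun_prop) (by fun_prop))
  · have : {φ : V → ℝ | ∀ z ∈ P, ∀ u ∈ U, X.J z u ≠ 0 →
          |φ u| ≤ X.lam * X.f (X.J z u) * max |φ z| X.K} =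
        ⋂ z ∈ P, ⋂ u ∈ U, {φ : V → ℝ | X.J z u ≠ 0 →
          |φ u| ≤ X.lam * X.f (X.J z u) * max |φ z| X.K} := by ext; simp
    change MeasurableSet {φ : V → ℝ | ∀ z ∈ P, ∀ u ∈ U, X.J z u ≠ 0 →
          |φ u| ≤ X.lam * X.f (X.J z u) * max |φ z| X.K}
    rw [this]
    refine Finset.measurableSet_biInter _ (fun z _ => Finset.measurableSet_biInter _ (fun u _ => ?_))
    by_cases hJ : X.J z u = 0
    · simp [hJ]
    · simp only [ne_eq, hJ, not_false_eq_true, true_imp_iff]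
      exact measurableSet_le (by fun_prop) (by fun_prop)

/-- The replacement estimate. -/
lemma Ctx.Good.replace {V : Type*} {X : Ctx V} (hX : X.Good) (P U : Finset V)
    (hPU : Disjoint P U) (hΛ : P ∪ U = X.Λ) (r : V → ℝ)
    (hr : ∀ z ∈ P, Reach X.J X.f X.lam X.Λ X.Δ X.K z (r z))
    (φ ψ : V → ℝ) (hφ : φ ∈ X.Q P P U r) (hψ : ∀ z ∈ P, |ψ z| ≤ X.M) :
    X.w φ ≤ (∏ z ∈ P, ENNReal.ofReal (Real.exp (X.a0 * (max |φ z| X.K) ^ 2))) *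
      X.w (spl (P : Set V) ψ φ) := by
  have hl0 : (0:ℝ) ≤ X.lam := by linarith [hX.hlam]
  set m : V → ℝ := fun z => max |φ z| X.K with hm
  have hS' : ∀ x ∈ P, ∑ y ∈ P, |X.J x y| * X.f (X.J x y) + ∑ y ∈ U, |X.J x y| * X.f (X.J x y)
      + X.So x ≤ X.Mf := by
    intro x hx
    have := hX.hS x (hΛ ▸ Finset.mem_union_left _ hx)
    rwa [← hΛ, Finset.sum_union hPU] at this
  have hh : ∀ x ∈ P, |X.h x| ≤ X.So x * (X.lam * m x) := by
    intro x hx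
    refine (hX.hfield x _ (hr x hx)).trans ?_
    exact mul_le_mul_of_nonneg_left (mul_le_mul_of_nonneg_left (hφ.1 x hx) hl0) (hX.hSo x)
  have d1 := energy_diff X.J X.f X.β X.lam X.Mf hX.hJsymm hX.hf1 hX.hβ hX.hlam P U hPU X.h φ m X.So
    (fun x _ => le_max_left _ _) hφ.2 hh hS'
  have hUs : ∀ u ∈ U, spl (P : Set V) ψ φ u = φ u := fun u hu =>
    spl_of_not_mem (fun hP => (Finset.disjoint_left.1 hPU) hP hu)
  have d2 := energy_diff X.J X.f X.β X.lam X.Mf hX.hJsymm hX.hf1 hX.hβ hX.hlam P U hPU X.h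
    (spl (P : Set V) ψ φ) m X.So
    (fun x hx => by
      rw [spl_of_mem (by exact hx)]
      exact ((hψ x hx).trans hX.hMK).trans (le_max_right _ _))
    (fun x hx u hu hJ => by
      rw [hUs u hu]; exact hφ.2 x hx u hu hJ) hh hS'
  have e : HV X.J X.β U X.h (spl (P : Set V) ψ φ) = HV X.J X.β U X.h φ :=
    HV_congr _ _ _ _ hUs
  rw [e] at d2
  rw [hΛ] at d1 d2
  unfold Ctx.w
  rw [← ENNReal.ofReal_prod_of_nonneg (fun _ _ => (Real.exp_pos _).le), ← Real.exp_sum,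
    ← ENNReal.ofReal_mul (Real.exp_pos _).le, ← Real.exp_add]
  apply ENNReal.ofReal_le_ofReal
  apply Real.exp_le_exp.2
  rw [← Finset.mul_sum]
  have := abs_le.1 d1
  have := abs_le.1 d2
  have e2 : X.a0 * ∑ z ∈ P, (max |φ z| X.K) ^ 2 =
    2 * (X.β * (X.lam * X.Mf * ∑ x ∈ P, (m x) ^ 2)) := by simp only [Ctx.a0, hm]; ring
  rw [e2]
  linarith

lemma Ctx.Good.base {V : Type*} {X : Ctx V} (hX : X.Good) (P U : Finset V)
    (hPU : Disjoint P U) (hΛ : P ∪ U = X.Λ) (r : V → ℝ)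
    (hr : ∀ z ∈ P, Reach X.J X.f X.lam X.Λ X.Δ X.K z (r z))
    (G : (V → ℝ) → ℝ≥0∞) (hG : Measurable G) (hGd : DependsOn G (P : Set V)) :
    ∫⁻ φ, G φ * ((X.Q P P U r).indicator 1 φ * X.w φ) ∂(PP V X.ρ) ≤
      (∫⁻ φ, X.w φ ∂(PP V X.ρ)) * ∫⁻ φ, G φ * ∏ z ∈ P, X.k (φ z) ∂(PP V X.ρ) := by
  have := hX.prob
  set c := X.ρ {u | |u| ≤ X.M} with hcdef
  have hc0 : c ≠ 0 := hX.hc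
  have hct : c ≠ ⊤ := measure_ne_top _ _
  set L : (V → ℝ) → ℝ≥0∞ := fun φ => ∫⁻ ψ, X.w (spl (P : Set V) ψ φ) ∂(PP V X.ρ) with hL
  have hLm : Measurable L :=
    Measurable.lintegral_prod_left' (X.measurable_w.comp (measurable_spl (P : Set V)))
  have hLd : DependsOn L (P : Set V)ᶜ := by
    intro φ φ' hφ
    simp only [hL]
    congr 1
    funext ψ
    congr 1
    funext x
    by_cases hx : x ∈ (P : Set V)
    · rw [spl_of_mem hx, spl_of_mem hx]
    · rw [spl_of_not_mem hx, spl_of_not_mem hx, hφ x hx]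
  have hFm : Measurable (fun φ : V → ℝ => G φ * ∏ z ∈ P, X.k (φ z)) :=
    hG.mul (Finset.measurable_prod _ (fun z _ => X.measurable_k.comp (measurable_pi_apply z)))
  have hFd : DependsOn (fun φ : V → ℝ => G φ * ∏ z ∈ P, X.k (φ z)) (P : Set V) := by
    intro φ φ' hφ
    simp only
    rw [hGd hφ, show ∏ z ∈ P, X.k (φ z) = ∏ z ∈ P, X.k (φ' z) from
      dependsOn_prod P (fun _ => X.k) hφ]
  have key : ∀ φ, G φ * ((X.Q P P U r).indicator 1 φ * X.w φ) ≤
      (G φ * ∏ z ∈ P, X.k (φ z)) * L φ := by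
    intro φ
    by_cases hφ : φ ∈ X.Q P P U r
    swap
    · simp [hφ]
    rw [Set.indicator_of_mem hφ, Pi.one_apply, one_mul, mul_assoc]
    refine mul_le_mul_right ?_ _
    have hB : ∫⁻ ψ : V → ℝ, ∏ z ∈ P, (Set.indicator {u : ℝ | |u| ≤ X.M} (1 : ℝ → ℝ≥0∞) (ψ z))
        ∂(PP V X.ρ) = c ^ P.card := by
      have hms : MeasurableSet {u : ℝ | |u| ≤ X.M} := measurableSet_le (by fun_prop) (by fun_prop)
      rw [lintegral_coord_prod X.ρ P (fun _ => Set.indicator {u : ℝ | |u| ≤ X.M} 1)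
        (fun _ => measurable_one.indicator hms)]
      rw [lintegral_indicator_one hms, Finset.prod_const]
    have h1 : c ^ P.card * X.w φ ≤
        (∏ z ∈ P, ENNReal.ofReal (Real.exp (X.a0 * (max |φ z| X.K) ^ 2))) * L φ := by
      rw [← hB, ← lintegral_mul_const' _ _ (by simp [Ctx.w])]
      simp only [hL]
      rw [← lintegral_const_mul' _ _ (by
        exact (ENNReal.prod_lt_top (fun _ _ => ENNReal.ofReal_lt_top)).ne)]
      refine lintegral_mono (fun ψ => ?_)
      by_cases hψ : ∀ z ∈ P, |ψ z| ≤ X.M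
      · have : ∏ z ∈ P, (Set.indicator {u : ℝ | |u| ≤ X.M} (1 : ℝ → ℝ≥0∞) (ψ z)) = 1 :=
          Finset.prod_eq_one (fun z hz => by simp [hψ z hz])
        rw [this, one_mul]
        exact hX.replace P U hPU hΛ r hr φ ψ hφ hψ
      · push Not at hψ
        obtain ⟨z, hz, hz2⟩ := hψ
        rw [Finset.prod_eq_zero hz (by simp [hz2]), zero_mul]
        exact zero_le
    have h2 : ∏ z ∈ P, X.k (φ z) =
        (∏ z ∈ P, ENNReal.ofReal (Real.exp (X.a0 * (max |φ z| X.K) ^ 2))) * (c ^ P.card)⁻¹ := by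
      unfold Ctx.k
      rw [Finset.prod_mul_distrib, Finset.prod_const, ENNReal.inv_pow]
    rw [h2, mul_assoc, mul_comm _ (L φ), ← mul_assoc, ← div_eq_mul_inv]
    rw [ENNReal.le_div_iff_mul_le (Or.inl (pow_ne_zero _ hc0)) (Or.inl (ENNReal.pow_ne_top hct)),
      mul_comm]
    exact h1
  calc _ ≤ ∫⁻ φ, (G φ * ∏ z ∈ P, X.k (φ z)) * L φ ∂(PP V X.ρ) := lintegral_mono key
    _ = (∫⁻ φ, (G φ * ∏ z ∈ P, X.k (φ z)) ∂(PP V X.ρ)) * ∫⁻ φ, L φ ∂(PP V X.ρ) :=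
        lintegral_indep X.ρ (P : Set V) _ L hFm hLm hFd hLd
    _ = _ := by
        rw [mul_comm]
        congr 1
        exact (lintegral_spl X.ρ (P : Set V) X.w X.measurable_w).symm


lemma Ctx.Good.prod_le_two {V : Type*} {X : Ctx V} (hX : X.Good) (x : V) (U : Finset V) :
    ∏ s ∈ U, (1 + 2 * ENNReal.ofReal (X.v x s)) ≤ 2 := by
  have h1 : ∀ s ∈ U, (1 + 2 * ENNReal.ofReal (X.v x s)) = ENNReal.ofReal (1 + 2 * X.v x s) := by
    intro s _
    have := hX.hv0 x s
    rw [ENNReal.ofReal_add (by norm_num) (by positivity), ENNReal.ofReal_mul (by norm_num)]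
    simp
  rw [Finset.prod_congr rfl h1, ← ENNReal.ofReal_prod_of_nonneg
    (fun s _ => by have := hX.hv0 x s; positivity)]
  have h2 : ∏ s ∈ U, (1 + 2 * X.v x s) ≤ Real.exp (∑ s ∈ U, 2 * X.v x s) := by
    rw [Real.exp_sum]
    refine Finset.prod_le_prod (fun s _ => by have := hX.hv0 x s; positivity) (fun s _ => ?_)
    linarith [Real.add_one_le_exp (2 * X.v x s)]
  have h3 : Real.exp (∑ s ∈ U, 2 * X.v x s) ≤ 2 := by
    rw [← Finset.mul_sum]
    have := hX.hvS x U
    have h4 : Real.exp (2 * ∑ s ∈ U, X.v x s) ≤ Real.exp (1/2) :=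
      Real.exp_le_exp.2 (by linarith)
    refine h4.trans ?_
    have h5 : Real.exp (1/2) ^ 2 ≤ 4 := by
      rw [← Real.exp_nat_mul]
      norm_num
      linarith [Real.exp_one_lt_d9]
    nlinarith [Real.exp_pos (1/2)]
  calc _ ≤ ENNReal.ofReal 2 := ENNReal.ofReal_le_ofReal (h2.trans h3)
    _ = 2 := by simp

lemma Ctx.Good.explore {V : Type*} {X : Ctx V} (hX : X.Good) (n : ℕ) :
    ∀ (P D U : Finset V) (r : V → ℝ) (G : (V → ℝ) → ℝ≥0∞), 2 * U.card + D.card ≤ n →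
    Disjoint P D → Disjoint (P ∪ D) U → (P ∪ D) ∪ U = X.Λ →
    (∀ z ∈ P ∪ D, Reach X.J X.f X.lam X.Λ X.Δ X.K z (r z)) →
    Measurable G → DependsOn G ((P ∪ D : Finset V) : Set V) →
    ∫⁻ φ, G φ * ((X.Q P (P ∪ D) U r).indicator 1 φ * X.w φ) ∂(PP V X.ρ) ≤
      ((∫⁻ φ, X.w φ ∂(PP V X.ρ)) * 2 ^ D.card) *
        ∫⁻ φ, G φ * ∏ z ∈ P ∪ D, X.k (φ z) ∂(PP V X.ρ) := by
  have := hX.prob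
  have hK0 : 0 ≤ X.K := hX.hM.trans hX.hMK
  have hl0 : (0:ℝ) ≤ X.lam := by linarith [hX.hlam]
  have hf0 : ∀ t, 0 ≤ X.f t := fun t => by linarith [hX.hf1 t]
  induction n with
  | zero =>
    intro P D U r G hn hPD hPDU hΛ hr hG hGd
    have hD : D = ∅ := Finset.card_eq_zero.1 (by omega)
    subst hD
    simp only [Finset.union_empty, Finset.card_empty, pow_zero, mul_one] at *
    exact hX.base P U hPDU hΛ r hr G hG hGd
  | succ n ih =>
    intro P D U r G hn hPD hPDU hΛ hr hG hGd
    rcases D.eq_empty_or_nonempty with hD | ⟨x, hx⟩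
    · subst hD
      simp only [Finset.union_empty, Finset.card_empty, pow_zero, mul_one] at *
      exact hX.base P U hPDU hΛ r hr G hG hGd
    set E := P ∪ D with hE
    have hxE : x ∈ E := Finset.mem_union_right _ hx
    set Z := ∫⁻ φ, X.w φ ∂(PP V X.ρ) with hZ
    set I := ∫⁻ φ, G φ * ∏ z ∈ E, X.k (φ z) ∂(PP V X.ρ) with hI
    let r' : Finset V → V → ℝ := fun S z => if z ∈ S then X.lam * X.f (X.J x z) * r x else r z
    let G' : Finset V → (V → ℝ) → ℝ≥0∞ := fun S φ => G φ * ∏ s ∈ S, X.T x s (φ s)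
    have hG'm : ∀ S, Measurable (G' S) := fun S =>
      hG.mul (Finset.measurable_prod _
        (fun s _ => (X.measurable_T x s).comp (measurable_pi_apply s)))
    -- splitting according to the children of x
    have split : ∀ φ, G φ * ((X.Q P E U r).indicator 1 φ * X.w φ) ≤
        ∑ S ∈ U.powerset, G' S φ *
          ((X.Q (insert x P) (E ∪ S) (U \ S) (r' S)).indicator 1 φ * X.w φ) := by
      intro φ
      by_cases hφ : φ ∈ X.Q P E U r
      swap
      · simp [hφ]
      let S := U.filter (fun u => X.J x u ≠ 0 ∧ X.lam * X.f (X.J x u) * max |φ x| X.K < |φ u|)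
      have hSU : S ∈ U.powerset := Finset.mem_powerset.2 (Finset.filter_subset _ _)
      refine le_trans (le_of_eq ?_) (Finset.single_le_sum (f := fun S => G' S φ *
          ((X.Q (insert x P) (E ∪ S) (U \ S) (r' S)).indicator 1 φ * X.w φ))
          (fun _ _ => zero_le) hSU)
      have hQ : φ ∈ X.Q (insert x P) (E ∪ S) (U \ S) (r' S) := by
        refine ⟨fun z hz => ?_, fun z hz u hu hJ => ?_⟩
        · by_cases hzS : z ∈ S
          · simp only [r', hzS, if_true]
            have := (Finset.mem_filter.1 hzS).2.2
            refine le_trans ?_ (this.le.trans (le_max_left _ _))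
            exact mul_le_mul_of_nonneg_left (hφ.1 x hxE) (mul_nonneg hl0 (hf0 _))
          · simp only [r', hzS, if_false]
            rcases Finset.mem_union.1 hz with h | h
            · exact hφ.1 z h
            · exact absurd h hzS
        · have huU := (Finset.mem_sdiff.1 hu)
          rcases Finset.mem_insert.1 hz with rfl | h
          · by_contra hcon
            exact huU.2 (Finset.mem_filter.2 ⟨huU.1, hJ, not_le.1 hcon⟩)
          · exact hφ.2 z h u huU.1 hJ
      have hT : ∏ s ∈ S, X.T x s (φ s) = 1 := by
        refine Finset.prod_eq_one (fun s hs => ?_)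
        have hs2 := (Finset.mem_filter.1 hs).2
        unfold Ctx.T
        rw [if_pos]
        refine ⟨hs2.1, lt_of_le_of_lt ?_ hs2.2⟩
        calc X.f (X.J x s) * X.K ≤ X.f (X.J x s) * max |φ x| X.K :=
              mul_le_mul_of_nonneg_left (le_max_right _ _) (hf0 _)
          _ ≤ X.lam * (X.f (X.J x s) * max |φ x| X.K) := by
              refine le_mul_of_one_le_left (mul_nonneg (hf0 _) (hK0.trans (le_max_right _ _))) hX.hlam
          _ = _ := by ring
      simp only [G']
      rw [hT, mul_one, Set.indicator_of_mem hφ, Set.indicator_of_mem hQ]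
    -- each term
    have term : ∀ S ∈ U.powerset, ∫⁻ φ, G' S φ *
          ((X.Q (insert x P) (E ∪ S) (U \ S) (r' S)).indicator 1 φ * X.w φ) ∂(PP V X.ρ) ≤
        (Z * 2 ^ (D.card - 1) * I) * ∏ s ∈ S, (2 * ENNReal.ofReal (X.v x s)) := by
      intro S hS
      have hSU := Finset.mem_powerset.1 hS
      by_cases hJS : ∃ s ∈ S, X.J x s = 0
      · obtain ⟨s, hs, hJ⟩ := hJS
        have : ∀ φ, G' S φ = 0 := by
          intro φ
          simp only [G']
          rw [Finset.prod_eq_zero hs (by simp [Ctx.T, hJ]), mul_zero]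
        simp [this]
      push Not at hJS
      have hES : Disjoint E S := Finset.disjoint_of_subset_right hSU hPDU
      have hEeq : insert x P ∪ (D.erase x ∪ S) = E ∪ S := by
        ext y
        simp only [Finset.mem_union, Finset.mem_insert, Finset.mem_erase, hE]
        by_cases hyx : y = x
        · subst hyx; simp [hx]
        · simp [hyx, or_assoc]
      have hcard : (D.erase x ∪ S).card = D.card - 1 + S.card := by
        rw [Finset.card_union_of_disjoint, Finset.card_erase_of_mem hx]
        exact Finset.disjoint_of_subset_left ((Finset.erase_subset _ _).trans
          Finset.subset_union_right) hES
      have hDpos : 0 < D.card := Finset.card_pos.2 ⟨x, hx⟩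
      have hcU : (U \ S).card = U.card - S.card := Finset.card_sdiff_of_subset hSU
      have hSle : S.card ≤ U.card := Finset.card_le_card hSU
      have ih' := ih (insert x P) (D.erase x ∪ S) (U \ S) (r' S) (G' S)
        (by rw [hcard, hcU]; omega)
        (by
          rw [Finset.disjoint_left]
          intro y hy hy2
          rcases Finset.mem_insert.1 hy with rfl | h
          · rcases Finset.mem_union.1 hy2 with h2 | h2
            · simp at h2
            · exact Finset.disjoint_left.1 hES hxE h2
          · rcases Finset.mem_union.1 hy2 with h2 | h2
            · exact Finset.disjoint_left.1 hPD h (Finset.mem_of_mem_erase h2)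
            · exact Finset.disjoint_left.1 hES (Finset.mem_union_left _ h) h2)
        (by
          rw [hEeq, Finset.disjoint_union_left]
          exact ⟨Finset.disjoint_of_subset_right Finset.sdiff_subset hPDU,
            Finset.disjoint_sdiff⟩)
        (by
          rw [hEeq, Finset.union_assoc, Finset.union_sdiff_of_subset hSU]
          exact hΛ)
        (by
          rw [hEeq]
          intro z hz
          by_cases hzS : z ∈ S
          · simp only [r', hzS, if_true]
            exact Reach.step (hr x hxE) (hΛ ▸ Finset.mem_union_right _ (hSU hzS)) (hJS z hzS)
          · simp only [r', hzS, if_false]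
            rcases Finset.mem_union.1 hz with h | h
            · exact hr z h
            · exact absurd h hzS)
        (hG'm S)
        (by
          rw [hEeq]
          intro φ φ' hφ
          simp only [G']
          rw [hGd (fun i hi => hφ i (Finset.mem_coe.2 (Finset.mem_union_left _ hi)))]
          congr 1
          exact Finset.prod_congr rfl (fun s hs => by
            rw [hφ s (Finset.mem_coe.2 (Finset.mem_union_right _ hs))]))
      rw [hEeq, hcard] at ih'
      refine ih'.trans ?_
      have fac : ∫⁻ φ, G' S φ * ∏ z ∈ E ∪ S, X.k (φ z) ∂(PP V X.ρ) ≤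
          I * ∏ s ∈ S, ENNReal.ofReal (X.v x s) := by
        have e1 : ∀ φ : V → ℝ, G' S φ * ∏ z ∈ E ∪ S, X.k (φ z) =
            (G φ * ∏ z ∈ E, X.k (φ z)) * ∏ s ∈ S, (X.k (φ s) * X.T x s (φ s)) := by
          intro φ
          simp only [G']
          rw [Finset.prod_union hES, Finset.prod_mul_distrib]
          ring
        simp_rw [e1]
        rw [lintegral_indep X.ρ (E : Set V) (fun φ => G φ * ∏ z ∈ E, X.k (φ z))
          (fun φ => ∏ s ∈ S, (X.k (φ s) * X.T x s (φ s))),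
          lintegral_coord_prod X.ρ S (fun s u => X.k u * X.T x s u)
            (fun s => X.measurable_k.mul (X.measurable_T x s))]
        · refine mul_le_mul_right ?_ _
          exact Finset.prod_le_prod' (fun s _ => hX.hw x s)
        · exact hG.mul (Finset.measurable_prod _
            (fun z _ => X.measurable_k.comp (measurable_pi_apply z)))
        · exact Finset.measurable_prod _ (fun s _ =>
            (X.measurable_k.mul (X.measurable_T x s)).comp (measurable_pi_apply s))
        · intro φ φ' hφ
          simp only
          rw [hGd hφ]
          congr 1
          exact Finset.prod_congr rfl (fun s hs => by rw [hφ s hs])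
        · intro φ φ' hφ
          refine Finset.prod_congr rfl (fun s hs => ?_)
          rw [hφ s (fun h => Finset.disjoint_left.1 hES h hs)]
      calc _ ≤ Z * 2 ^ (D.card - 1 + S.card) * (I * ∏ s ∈ S, ENNReal.ofReal (X.v x s)) :=
            mul_le_mul_right fac _
        _ = _ := by
            rw [Finset.prod_mul_distrib, Finset.prod_const, pow_add]
            ring
    calc _ ≤ ∫⁻ φ, ∑ S ∈ U.powerset, G' S φ *
          ((X.Q (insert x P) (E ∪ S) (U \ S) (r' S)).indicator 1 φ * X.w φ) ∂(PP V X.ρ) :=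
          lintegral_mono split
      _ = ∑ S ∈ U.powerset, ∫⁻ φ, G' S φ *
          ((X.Q (insert x P) (E ∪ S) (U \ S) (r' S)).indicator 1 φ * X.w φ) ∂(PP V X.ρ) := by
          rw [lintegral_finsetSum]
          intro S _
          exact (hG'm S).mul ((measurable_one.indicator (X.measurableSet_Q _ _ _ _)).mul
            X.measurable_w)
      _ ≤ ∑ S ∈ U.powerset,
          (Z * 2 ^ (D.card - 1) * I) * ∏ s ∈ S, (2 * ENNReal.ofReal (X.v x s)) :=
          Finset.sum_le_sum term
      _ = (Z * 2 ^ (D.card - 1) * I) * ∏ s ∈ U, (1 + 2 * ENNReal.ofReal (X.v x s)) := by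
          rw [← Finset.mul_sum, Finset.prod_one_add]
      _ ≤ (Z * 2 ^ (D.card - 1) * I) * 2 := mul_le_mul_right (hX.prod_le_two x U) _
      _ = Z * 2 ^ D.card * I := by
          have hDpos : 0 < D.card := Finset.card_pos.2 ⟨x, hx⟩
          obtain ⟨d, hd⟩ : ∃ d, D.card = d + 1 := ⟨D.card - 1, by omega⟩
          rw [hd, Nat.add_sub_cancel, pow_succ]
          ring

/-- Consequence: marginal bound. -/
lemma Ctx.Good.main {V : Type*} {X : Ctx V} (hX : X.Good) (hΔ : X.Δ ⊆ X.Λ)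
    (G : (V → ℝ) → ℝ≥0∞) (hG : Measurable G) (hGd : DependsOn G (X.Δ : Set V)) :
    ∫⁻ φ, G φ * X.w φ ∂(PP V X.ρ) ≤
      ((∫⁻ φ, X.w φ ∂(PP V X.ρ)) * 2 ^ X.Δ.card) *
        ∫⁻ φ, G φ * ∏ z ∈ X.Δ, X.k (φ z) ∂(PP V X.ρ) := by
  have h := hX.explore _ ∅ X.Δ (X.Λ \ X.Δ) (fun _ => X.K) G le_rfl (by simp)
    (by simpa using Finset.disjoint_sdiff) (by simpa using Finset.union_sdiff_of_subset hΔ)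
    (by intro z hz; exact Reach.root (by simpa using hz)) hG (by simpa using hGd)
  have hQ : X.Q ∅ (∅ ∪ X.Δ) (X.Λ \ X.Δ) (fun _ => X.K) = Set.univ := by
    ext φ; simp [Ctx.Q]
  rw [hQ] at h
  simpa using h


/-! ### Constants and boundary fields -/

/-- Standing assumptions. -/
structure SetupP {V : Type*} (J : V → V → ℝ) (f : ℝ → ℝ) (δf Mf β : ℝ) (ρ : Measure ℝ)
    (lam : ℝ) : Prop where
  hδf : 0 < δf
  hMf : 0 < Mf
  hJsymm : ∀ x y, J x y = J y x
  hf1 : ∀ t, 1 ≤ f t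
  hflog : ∀ t : ℝ, t ≠ 0 → |t| < δf → (Real.log (|t|⁻¹)) ^ ((1 : ℝ) / 2) ≤ f t
  hJsum : ∀ x, Summable fun y => |J x y| * f (J x y)
  hJbound : ∀ x, ∑' y, |J x y| * f (J x y) ≤ Mf
  hβ : 0 ≤ β
  prob : IsProbabilityMeasure ρ
  hρ : ∀ a : ℝ, 0 < a → ∫⁻ u, ENNReal.ofReal (Real.exp (a * u ^ 2)) ∂ρ < ⊤
  hlam : 1 ≤ lam

section
variable {V : Type*} {J : V → V → ℝ} {f : ℝ → ℝ} {δf Mf β : ℝ} {ρ : Measure ℝ} {lam : ℝ}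

lemma SetupP.exp_f (H : SetupP J f δf Mf β ρ lam) (t : ℝ) (ht : t ≠ 0) :
    Real.exp (-(f t) ^ 2) ≤ (1 + 1 / δf) * |t| := by
  have hδ := H.hδf
  have ht0 : 0 < |t| := abs_pos.2 ht
  have hle1 : Real.exp (-(f t) ^ 2) ≤ 1 := Real.exp_le_one_iff.2 (by nlinarith [sq_nonneg (f t)])
  have hd : 0 < 1 / δf := by positivity
  by_cases hlt : |t| < δf
  · by_cases h1 : 1 ≤ |t|
    · nlinarith
    · push Not at h1
      have hlog : 0 ≤ Real.log (|t|⁻¹) := Real.log_nonneg ((one_le_inv₀ ht0).2 h1.le)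
      have h2 := H.hflog t ht hlt
      rw [← Real.sqrt_eq_rpow] at h2
      have h3 : Real.log (|t|⁻¹) ≤ (f t)^2 := by
        have := Real.sq_sqrt hlog
        have h4 := Real.sqrt_nonneg (Real.log (|t|⁻¹))
        nlinarith
      have h5 : Real.exp (-(f t)^2) ≤ |t| := by
        rw [Real.log_inv] at h3
        calc Real.exp (-(f t)^2) ≤ Real.exp (Real.log |t|) := Real.exp_le_exp.2 (by linarith)
          _ = |t| := Real.exp_log ht0
      nlinarith
  · push Not at hlt
    have : 1 ≤ 1 / δf * |t| := by
      rw [one_div, inv_mul_eq_div, le_div_iff₀ hδ]; linarith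
    nlinarith

lemma SetupP.Jsum (H : SetupP J f δf Mf β ρ lam) (x : V) (S : Finset V) :
    ∑ s ∈ S, |J x s| ≤ Mf := by
  refine le_trans ?_ (H.hJbound x)
  refine le_trans ?_ ((H.hJsum x).sum_le_tsum S (fun y _ => ?_))
  · exact Finset.sum_le_sum (fun s _ => le_mul_of_one_le_right (abs_nonneg _) (H.hf1 _))
  · exact mul_nonneg (abs_nonneg _) (by linarith [H.hf1 (J x y)])

lemma SetupP.consts (H : SetupP J f δf Mf β ρ lam) :
    ∃ (M K0 : ℝ) (v : V → V → ℝ), 0 ≤ M ∧ M ≤ K0 ∧ 1 ≤ K0 ∧ ρ {u | |u| ≤ M} ≠ 0 ∧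
      (∀ x s, 0 ≤ v x s) ∧ (∀ x (S : Finset V), ∑ s ∈ S, v x s ≤ 1 / 4) ∧
      ∀ K, K0 ≤ K → ∀ x s, ∫⁻ u, ENNReal.ofReal (Real.exp
        ((2 * β * Mf * lam) * (max |u| K) ^ 2)) * (ρ {u | |u| ≤ M})⁻¹ *
        (if J x s ≠ 0 ∧ f (J x s) * K < |u| then 1 else 0) ∂ρ ≤ ENNReal.ofReal (v x s) := by
  have := H.prob
  have hδ := H.hδf
  have ha0 : 0 ≤ 2 * β * Mf * lam := by
    have := H.hβ; have := H.hMf; have := H.hlam; positivity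
  set a0 := 2 * β * Mf * lam with ha0def
  obtain ⟨n, hn⟩ : ∃ n : ℕ, ρ {u | |u| ≤ (n : ℝ)} ≠ 0 := by
    by_contra hcon
    push Not at hcon
    have h1 : ρ (⋃ n : ℕ, {u | |u| ≤ (n : ℝ)}) = 0 := measure_iUnion_null hcon
    have h2 : (⋃ n : ℕ, {u : ℝ | |u| ≤ (n : ℝ)}) = Set.univ := by
      ext u; simp only [Set.mem_iUnion, Set.mem_setOf_eq, Set.mem_univ, iff_true]
      exact exists_nat_ge _
    rw [h2] at h1
    simp at h1
  set c := ρ {u | |u| ≤ (n : ℝ)} with hc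
  set C1 := c⁻¹ * ∫⁻ u, ENNReal.ofReal (Real.exp ((a0 + 1) * u ^ 2)) ∂ρ with hC1
  have hcinv : c⁻¹ ≠ ⊤ := ENNReal.inv_ne_top.2 hn
  have hC1t : C1 ≠ ⊤ := ENNReal.mul_ne_top hcinv (H.hρ (a0+1) (by positivity)).ne
  set C := C1.toReal with hC
  have hC0 : 0 ≤ C := ENNReal.toReal_nonneg
  set D := C * (1 + 1 / δf) * Mf with hD
  have hD0 : 0 ≤ D := by have := H.hMf; positivity
  set L := Real.log (4 * D + 1) with hL
  have hL0 : 0 ≤ L := Real.log_nonneg (by linarith)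
  have heL : Real.exp (-L) = (4 * D + 1)⁻¹ := by
    rw [Real.exp_neg, Real.exp_log (by linarith)]
  refine ⟨n, L + 1 + n, fun x s => C * Real.exp (-L) * (1 + 1 / δf) * |J x s|, by positivity,
    by linarith, by have : (0:ℝ) ≤ n := by positivity
                    linarith, hn, fun x s => by positivity, ?_, ?_⟩
  · intro x S
    rw [← Finset.mul_sum]
    have h1 := H.Jsum x S
    calc _ ≤ C * Real.exp (-L) * (1 + 1 / δf) * Mf :=
          mul_le_mul_of_nonneg_left h1 (by positivity)
      _ = D * Real.exp (-L) := by rw [hD]; ring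
      _ = D / (4 * D + 1) := by rw [heL]; rfl
      _ ≤ 1 / 4 := by
        rw [div_le_iff₀ (by linarith)]; linarith
  · intro K hK x s
    by_cases hJ : J x s = 0
    · simp [hJ]
    have hn0 : (0:ℝ) ≤ n := by positivity
    have hK1 : L + 1 ≤ K := by linarith
    have hf := H.hf1 (J x s)
    set b := f (J x s) with hb
    have pt : ∀ u : ℝ, ENNReal.ofReal (Real.exp (a0 * (max |u| K) ^ 2)) * c⁻¹ *
        (if J x s ≠ 0 ∧ b * K < |u| then 1 else 0) ≤
        ENNReal.ofReal (Real.exp (-L) * ((1 + 1/δf) * |J x s|)) *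
          (c⁻¹ * ENNReal.ofReal (Real.exp ((a0 + 1) * u ^ 2))) := by
      intro u
      by_cases hu : b * K < |u|
      swap
      · simp [hu]
      simp only [ne_eq, hJ, not_false_eq_true, hu, and_self, if_true, mul_one]
      rw [mul_comm (ENNReal.ofReal (Real.exp (a0 * _))), mul_left_comm]
      refine mul_le_mul_right ?_ _
      rw [← ENNReal.ofReal_mul (by positivity)]
      apply ENNReal.ofReal_le_ofReal
      have hKu : K ≤ |u| := by nlinarith
      rw [max_eq_left hKu, sq_abs]
      have hsq : (b * K)^2 ≤ u^2 := by
        rw [← sq_abs u]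
        exact pow_le_pow_left₀ (by nlinarith) hu.le 2
      have h6 : L + b^2 ≤ u^2 := by
        refine le_trans ?_ hsq
        have : L + 1 ≤ K^2 := by nlinarith
        have hb2 : 1 ≤ b^2 := by nlinarith
        rw [mul_pow]
        nlinarith
      calc Real.exp (a0 * u^2) ≤ Real.exp (-L + -b^2 + (a0+1) * u^2) :=
            Real.exp_le_exp.2 (by nlinarith)
        _ = Real.exp (-L) * Real.exp (-b^2) * Real.exp ((a0+1) * u^2) := by
            rw [Real.exp_add, Real.exp_add]
        _ ≤ _ := by
            refine mul_le_mul_of_nonneg_right ?_ (Real.exp_pos _).le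
            exact mul_le_mul_of_nonneg_left (H.exp_f _ hJ) (Real.exp_pos _).le
    refine (lintegral_mono pt).trans ?_
    rw [lintegral_const_mul' _ _ ENNReal.ofReal_ne_top, lintegral_const_mul' _ _ hcinv, ← hC1,
      ← ENNReal.ofReal_toReal hC1t, ← ENNReal.ofReal_mul (by positivity)]
    apply ENNReal.ofReal_le_ofReal
    rw [← hC]
    apply le_of_eq; ring

/-- Outer interaction sum. -/
noncomputable def Sout (J : V → V → ℝ) (f : ℝ → ℝ) (Λ : Finset V) (x : V) : ℝ :=
  ∑' z : {z : V // z ∉ Λ}, |J x z.1| * f (J x z.1)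

/-- The field condition. -/
def Fld (J : V → V → ℝ) (f : ℝ → ℝ) (lam : ℝ) (ξ : V → ℝ) (Λ Δ : Finset V) (K : ℝ) : Prop :=
  ∀ z r, Reach J f lam Λ Δ K z r → |hb J Λ ξ z| ≤ Sout J f Λ z * (lam * r)

lemma Reach.walk {Λ Δ : Finset V} {K : ℝ} (hΔ : Δ ⊆ Λ) {z : V} {r : ℝ}
    (h : Reach J f lam Λ Δ K z r) :
    ∃ (m : ℕ) (w : ℕ → V), IsWalk J (Λ : Set V) m w ∧ w 0 ∈ Δ ∧ w m = z ∧ z ∈ Λ ∧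
      r = K * lam ^ m * ∏ i ∈ Finset.range m, f (J (w i) (w (i + 1))) := by
  induction h with
  | root hz => exact ⟨0, fun _ => _, ⟨by intros; omega, by intros; omega⟩, hz, rfl, hΔ hz, by simp⟩
  | @step z y r _ hy hJ ih =>
    obtain ⟨m, w, hw, h0, hm, hz, hr⟩ := ih
    let w' : ℕ → V := fun i => if i ≤ m then w i else y
    have hle : ∀ i, i ≤ m → w' i = w i := fun i hi => by simp [w', hi]
    have hlast : w' (m+1) = y := by simp [w']
    refine ⟨m+1, w', ⟨?_, ?_⟩, ?_, hlast, hy, ?_⟩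
    · intro i hi hi2
      rw [hle i (by omega)]
      rcases Nat.lt_or_ge i m with h | h
      · exact hw.1 i hi h
      · rw [show i = m by omega, hm]; exact hz
    · intro i hi
      rcases Nat.lt_or_ge i m with h | h
      · rw [hle i (by omega), hle (i+1) (by omega)]; exact hw.2 i h
      · rw [show i = m by omega, hle m le_rfl, hlast, hm]; exact hJ
    · rw [hle 0 (by omega)]; exact h0
    · rw [Finset.prod_range_succ, hlast, hle m le_rfl, hm, hr]
      have : ∏ i ∈ Finset.range m, f (J (w' i) (w' (i + 1))) =
          ∏ i ∈ Finset.range m, f (J (w i) (w (i + 1))) := by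
        refine Finset.prod_congr rfl (fun i hi => ?_)
        have := Finset.mem_range.1 hi
        rw [hle i (by omega), hle (i+1) (by omega)]
      rw [this]; ring

lemma SetupP.Sout_nonneg (H : SetupP J f δf Mf β ρ lam) (Λ : Finset V) (x : V) :
    0 ≤ Sout J f Λ x :=
  tsum_nonneg (fun z => mul_nonneg (abs_nonneg _) (by linarith [H.hf1 (J x z.1)]))

lemma SetupP.Sout_zero (H : SetupP J f δf Mf β ρ lam) (ξ : V → ℝ) (Λ : Finset V) (x : V)
    (h : Sout J f Λ x = 0) : hb J Λ ξ x = 0 := by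
  have hs : Summable (fun z : {z : V // z ∉ Λ} => |J x z.1| * f (J x z.1)) :=
    (H.hJsum x).subtype _
  have hn : ∀ z : {z : V // z ∉ Λ}, 0 ≤ |J x z.1| * f (J x z.1) :=
    fun z => mul_nonneg (abs_nonneg _) (by linarith [H.hf1 (J x z.1)])
  have h0 : HasSum (fun z : {z : V // z ∉ Λ} => |J x z.1| * f (J x z.1)) 0 := by
    have := hs.hasSum
    rwa [show (∑' z : {z : V // z ∉ Λ}, |J x z.1| * f (J x z.1)) = 0 from h] at this
  rw [hasSum_zero_iff_of_nonneg hn] at h0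
  have : ∀ z : {z : V // z ∉ Λ}, J x z.1 * ξ z.1 = 0 := by
    intro z
    have hz := congrFun h0 z
    simp only [Pi.zero_apply, mul_eq_zero, abs_eq_zero] at hz
    rcases hz with hz | hz
    · rw [hz, zero_mul]
    · linarith [H.hf1 (J x z.1)]
  unfold hb
  simp [this]

lemma SetupP.fld_of_A (H : SetupP J f δf Mf β ρ lam) (ξ : V → ℝ) (Λ Δ : Finset V)
    (hΔ : Δ ⊆ Λ) (A K : ℝ)
    (hA : ∀ x ∈ Δ, ARealL J f lam ξ 1 x (Λ : Set V) ≤ A) (hK : A + 1 ≤ K) :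
    Fld J f lam ξ Λ Δ K := by
  intro z r hr
  obtain ⟨m, w, hw, h0, hm, hz, hreq⟩ := hr.walk hΔ
  have hprod : ∀ (m : ℕ) (w : ℕ → V), 1 ≤ ∏ i ∈ Finset.range m, f (J (w i) (w (i + 1))) := by
    intro m w
    calc (1:ℝ) = ∏ i ∈ Finset.range m, 1 := by simp
      _ ≤ _ := Finset.prod_le_prod (fun _ _ => by norm_num) (fun i _ => H.hf1 _)
  have hAx := hA (w 0) h0
  unfold ARealL at hAx
  set S := {A : ℝ | 1 ≤ A ∧ ∀ (m : ℕ) (w' : ℕ → V), IsWalk J (Λ : Set V) m w' → w' 0 = w 0 →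
    w' m ∈ (Λ : Set V) →
    |∑' z : {z : V // z ∉ (Λ : Set V)}, J (w' m) z.1 * ξ z.1| ≤
      (∑' z : {z : V // z ∉ (Λ : Set V)}, |J (w' m) z.1| * f (J (w' m) z.1)) * 1 * A *
        lam ^ (m + 1) * ∏ i ∈ Finset.range m, f (J (w' i) (w' (i + 1)))} with hS
  have hne : S.Nonempty := by
    refine ⟨1 + ∑ y ∈ Λ, |hb J Λ ξ y| / Sout J f Λ y, ?_, ?_⟩
    · have : 0 ≤ ∑ y ∈ Λ, |hb J Λ ξ y| / Sout J f Λ y :=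
        Finset.sum_nonneg (fun y _ => div_nonneg (abs_nonneg _) (H.Sout_nonneg _ _))
      linarith
    · intro m w' _ _ hw'
      change |hb J Λ ξ (w' m)| ≤ Sout J f Λ (w' m) * 1 * _ * _ * _
      set A0 := 1 + ∑ y ∈ Λ, |hb J Λ ξ y| / Sout J f Λ y
      have hge : |hb J Λ ξ (w' m)| / Sout J f Λ (w' m) ≤ A0 := by
        have := Finset.single_le_sum (f := fun y => |hb J Λ ξ y| / Sout J f Λ y)
          (fun y _ => div_nonneg (abs_nonneg _) (H.Sout_nonneg _ _)) (Finset.mem_coe.1 hw')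
        simp only [A0]; linarith
      have h1 : |hb J Λ ξ (w' m)| ≤ Sout J f Λ (w' m) * A0 := by
        rcases (H.Sout_nonneg Λ (w' m)).eq_or_lt with h | h
        · rw [H.Sout_zero ξ Λ _ h.symm, ← h]; simp
        · rwa [div_le_iff₀ h, mul_comm] at hge
      have h2 : 1 ≤ lam ^ (m+1) * ∏ i ∈ Finset.range m, f (J (w' i) (w' (i + 1))) :=
        one_le_mul_of_one_le_of_one_le (one_le_pow₀ H.hlam) (hprod m w')
      have h3 := (abs_nonneg _).trans h1
      calc _ ≤ _ := h1
        _ ≤ (Sout J f Λ (w' m) * A0) *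
          (lam ^ (m+1) * ∏ i ∈ Finset.range m, f (J (w' i) (w' (i + 1)))) :=
            le_mul_of_one_le_right h3 h2
        _ = _ := by ring
  obtain ⟨A', hA'S, hA'⟩ := exists_lt_of_csInf_lt hne (lt_of_le_of_lt hAx (by linarith : A < K))
  have h1 := hA'S.2 m w hw rfl (by rw [hm]; exact hz)
  change |hb J Λ ξ (w m)| ≤ Sout J f Λ (w m) * 1 * _ * _ * _ at h1
  rw [hm] at h1
  refine h1.trans ?_
  have hp := hprod m w
  have hl : 0 ≤ lam := by linarith [H.hlam]
  have hpos : 0 ≤ Sout J f Λ z * lam ^ (m+1) * ∏ i ∈ Finset.range m, f (J (w i) (w (i + 1))) :=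
    mul_nonneg (mul_nonneg (H.Sout_nonneg _ _) (by positivity)) (by linarith)
  calc _ = A' * (Sout J f Λ z * lam ^ (m+1) *
        ∏ i ∈ Finset.range m, f (J (w i) (w (i + 1)))) := by ring
    _ ≤ K * (Sout J f Λ z * lam ^ (m+1) *
        ∏ i ∈ Finset.range m, f (J (w i) (w (i + 1)))) := mul_le_mul_of_nonneg_right hA'.le hpos
    _ = _ := by rw [hreq]; ring

lemma Fld.neighbor {ξ : V → ℝ} {Λ : Finset V} {K : ℝ} {x y : V}
    (h : Fld J f lam ξ Λ {x} K) (hy : y ∈ Λ) (hJ : J x y ≠ 0) :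
    Fld J f lam ξ Λ {y} (lam * f (J x y) * K) := by
  intro z r hr
  apply h z r
  induction hr with
  | root hz =>
    rw [Finset.mem_singleton.1 hz]
    exact Reach.step (Reach.root (by simp)) hy hJ
  | step _ hy' hJ' ih => exact Reach.step ih hy' hJ'

lemma SetupP.sum_Sout (H : SetupP J f δf Mf β ρ lam) (Λ : Finset V) (x : V) :
    ∑ y ∈ Λ, |J x y| * f (J x y) + Sout J f Λ x ≤ Mf := by
  refine le_trans (le_of_eq ?_) (H.hJbound x)
  exact (H.hJsum x).sum_add_tsum_subtype_compl Λ

end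


/-! ### Finite-volume measures on `V → ℝ` -/

/-- Boltzmann weight. -/
noncomputable def WV {V : Type*} (J : V → V → ℝ) (β : ℝ) (Λ : Finset V) (h φ : V → ℝ) : ℝ≥0∞ :=
  ENNReal.ofReal (Real.exp (HV J β Λ h φ))

/-- Finite-volume measure, extended by the product measure outside `Λ`. -/
noncomputable def NU {V : Type*} (J : V → V → ℝ) (β : ℝ) (ρ : Measure ℝ) (Λ : Finset V)
    (h : V → ℝ) : Measure (V → ℝ) :=
  (∫⁻ φ, WV J β Λ h φ ∂(PP V ρ))⁻¹ • (PP V ρ).withDensity (WV J β Λ h)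

/-- Envelope constant. -/
noncomputable def Cenv {V : Type*} (J : V → V → ℝ) (β : ℝ) (Λ : Finset V) (R : ℝ) : ℝ :=
  |β| * (1 / 2 * ∑ x ∈ Λ, ∑ y ∈ Λ, |J x y| + ∑ _x ∈ Λ, R) + 1

lemma measurable_WV {V : Type*} (J : V → V → ℝ) (β : ℝ) (Λ : Finset V) (h : V → ℝ) :
    Measurable (WV J β Λ h) :=
  ENNReal.measurable_ofReal.comp (Real.measurable_exp.comp (measurable_HV J β Λ h))

lemma Cenv_pos {V : Type*} (J : V → V → ℝ) (β : ℝ) (Λ : Finset V) (R : ℝ) (hR : 0 ≤ R) :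
    0 < Cenv J β Λ R := by
  unfold Cenv
  have : 0 ≤ ∑ x ∈ Λ, ∑ y ∈ Λ, |J x y| :=
    Finset.sum_nonneg fun x _ => Finset.sum_nonneg fun y _ => abs_nonneg _
  have : 0 ≤ ∑ _x ∈ Λ, R := Finset.sum_nonneg fun x _ => hR
  positivity

lemma HV_le {V : Type*} (J : V → V → ℝ) (β : ℝ) (Λ : Finset V) (R : ℝ) (hR : 0 ≤ R)
    (h φ : V → ℝ) (hh : ∀ x ∈ Λ, |h x| ≤ R) :
    HV J β Λ h φ ≤ ∑ x ∈ Λ, Cenv J β Λ R * (1 + φ x ^ 2) := by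
  set S := ∑ z ∈ Λ, (1 + φ z ^ 2) with hS
  have hS0 : 0 ≤ S := Finset.sum_nonneg fun z _ => by positivity
  have hle : ∀ x ∈ Λ, 1 + φ x ^ 2 ≤ S := fun x hx =>
    Finset.single_le_sum (f := fun z => 1 + φ z ^ 2) (fun z _ => by positivity) hx
  rw [← Finset.mul_sum, ← hS]
  have h1 : |∑ x ∈ Λ, ∑ y ∈ Λ, (if x ≠ y then J x y * φ x * φ y else 0)| ≤
      (∑ x ∈ Λ, ∑ y ∈ Λ, |J x y|) * S := by
    rw [Finset.sum_mul]
    refine (Finset.abs_sum_le_sum_abs _ _).trans (Finset.sum_le_sum fun x hx => ?_)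
    rw [Finset.sum_mul]
    refine (Finset.abs_sum_le_sum_abs _ _).trans (Finset.sum_le_sum fun y hy => ?_)
    split_ifs
    · rw [mul_assoc, abs_mul]
      refine mul_le_mul_of_nonneg_left ?_ (abs_nonneg _)
      have := hle x hx; have := hle y hy
      rw [abs_le]; constructor <;> nlinarith [sq_nonneg (φ x - φ y), sq_nonneg (φ x + φ y)]
    · simp; positivity
  have h2 : |∑ x ∈ Λ, φ x * h x| ≤ (∑ _x ∈ Λ, R) * S := by
    rw [Finset.sum_mul]
    refine (Finset.abs_sum_le_sum_abs _ _).trans (Finset.sum_le_sum fun x hx => ?_)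
    rw [abs_mul, mul_comm]
    refine mul_le_mul (hh x hx) ?_ (abs_nonneg _) hR
    have := hle x hx
    rw [abs_le]; constructor <;> nlinarith [sq_nonneg (φ x - 1), sq_nonneg (φ x + 1)]
  refine (le_abs_self _).trans ?_
  unfold HV Cenv
  rw [abs_mul]
  have h3 : |1 / 2 * ∑ x ∈ Λ, ∑ y ∈ Λ, (if x ≠ y then J x y * φ x * φ y else 0)
    + ∑ x ∈ Λ, φ x * h x| ≤ (1 / 2 * ∑ x ∈ Λ, ∑ y ∈ Λ, |J x y| + ∑ _x ∈ Λ, R) * S := by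
    refine (abs_add_le _ _).trans ?_
    rw [abs_mul, abs_of_pos (by norm_num : (0:ℝ) < 1/2)]
    nlinarith
  have := mul_le_mul_of_nonneg_left h3 (abs_nonneg β)
  nlinarith

lemma WV_le {V : Type*} (J : V → V → ℝ) (β : ℝ) (Λ : Finset V) (R : ℝ) (hR : 0 ≤ R)
    (h φ : V → ℝ) (hh : ∀ x ∈ Λ, |h x| ≤ R) :
    WV J β Λ h φ ≤ ∏ x ∈ Λ, ENNReal.ofReal (Real.exp (Cenv J β Λ R * (1 + φ x ^ 2))) := by
  rw [← ENNReal.ofReal_prod_of_nonneg (fun _ _ => (Real.exp_pos _).le), ← Real.exp_sum]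
  exact ENNReal.ofReal_le_ofReal (Real.exp_le_exp.2 (HV_le J β Λ R hR h φ hh))

section
variable {V : Type*} {J : V → V → ℝ} {f : ℝ → ℝ} {δf Mf β : ℝ} {ρ : Measure ℝ} {lam : ℝ}

lemma SetupP.env_fin (H : SetupP J f δf Mf β ρ lam) (Λ : Finset V) (C : ℝ) (hC : 0 < C) :
    ∫⁻ φ : V → ℝ, ∏ x ∈ Λ, ENNReal.ofReal (Real.exp (C * (1 + φ x ^ 2))) ∂(PP V ρ) < ⊤ := by
  have := H.prob
  rw [lintegral_coord_prod ρ Λ (fun _ u => ENNReal.ofReal (Real.exp (C * (1 + u ^ 2))))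
    (fun _ => by fun_prop)]
  refine ENNReal.prod_lt_top fun x _ => ?_
  have : ∀ u : ℝ, ENNReal.ofReal (Real.exp (C * (1 + u ^ 2))) =
      ENNReal.ofReal (Real.exp C) * ENNReal.ofReal (Real.exp (C * u ^ 2)) := by
    intro u
    rw [← ENNReal.ofReal_mul (Real.exp_pos _).le, ← Real.exp_add]; ring_nf
  simp_rw [this]
  rw [lintegral_const_mul _ (by fun_prop)]
  exact ENNReal.mul_lt_top ENNReal.ofReal_lt_top (H.hρ C hC)

lemma fin_bdd (Λ : Finset V) (h : V → ℝ) : ∃ R, 0 ≤ R ∧ ∀ x ∈ Λ, |h x| ≤ R :=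
  ⟨∑ x ∈ Λ, |h x|, Finset.sum_nonneg fun _ _ => abs_nonneg _, fun x hx =>
    Finset.single_le_sum (f := fun x => |h x|) (fun _ _ => abs_nonneg _) hx⟩

lemma SetupP.Z_ne_top (H : SetupP J f δf Mf β ρ lam) (Λ : Finset V) (h : V → ℝ) :
    ∫⁻ φ, WV J β Λ h φ ∂(PP V ρ) ≠ ⊤ := by
  obtain ⟨R, hR, hh⟩ := fin_bdd Λ h
  refine ne_of_lt (lt_of_le_of_lt (lintegral_mono fun φ => WV_le J β Λ R hR h φ hh) ?_)
  exact H.env_fin Λ _ (Cenv_pos J β Λ R hR)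

lemma SetupP.Z_ne_zero (H : SetupP J f δf Mf β ρ lam) (Λ : Finset V) (h : V → ℝ) :
    ∫⁻ φ, WV J β Λ h φ ∂(PP V ρ) ≠ 0 := by
  have := H.prob
  rw [Ne, lintegral_eq_zero_iff (measurable_WV J β Λ h)]
  intro h0
  have : ∀ᵐ φ ∂(PP V ρ), False := by
    filter_upwards [h0] with φ hφ
    have : WV J β Λ h φ ≠ 0 := by
      unfold WV; simp [Real.exp_pos]
    exact this hφ
  rw [ae_iff] at this
  simp at this

lemma SetupP.NU_prob (H : SetupP J f δf Mf β ρ lam) (Λ : Finset V) (h : V → ℝ) :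
    IsProbabilityMeasure (NU J β ρ Λ h) := by
  constructor
  unfold NU
  rw [Measure.smul_apply, withDensity_apply _ MeasurableSet.univ, setLIntegral_univ, smul_eq_mul]
  exact ENNReal.inv_mul_cancel (H.Z_ne_zero Λ h) (H.Z_ne_top Λ h)

lemma lintegral_NU (Λ : Finset V) (h : V → ℝ) (G : (V → ℝ) → ℝ≥0∞) (hG : Measurable G) :
    ∫⁻ φ, G φ ∂(NU J β ρ Λ h) =
      (∫⁻ φ, WV J β Λ h φ ∂(PP V ρ))⁻¹ * ∫⁻ φ, G φ * WV J β Λ h φ ∂(PP V ρ) := by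
  unfold NU
  rw [lintegral_smul_measure, lintegral_withDensity_eq_lintegral_mul _ (measurable_WV J β Λ h) hG]
  simp only [Pi.mul_apply, smul_eq_mul, mul_comm]

lemma measurable_restrictTo (Λ : Finset V) : Measurable (restrictTo Λ) := by
  unfold restrictTo; fun_prop

lemma map_PP (ρ : Measure ℝ) [IsProbabilityMeasure ρ] (Λ : Finset V) :
    (PP V ρ).map (restrictTo Λ) = Measure.pi (fun _ : ↥Λ => ρ) := by
  have := Measure.infinitePi_map_restrict (fun _ : V => ρ) (I := Λ)
  exact this

lemma WV_eq_hamil (Λ : Finset V) (ξ φ : V → ℝ) :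
    WV J β Λ (hb J Λ ξ) φ = ENNReal.ofReal (Real.exp (hamil J β Λ ξ (restrictTo Λ φ))) := by
  rw [hamil_eq, WV]

lemma measurable_hamil (Λ : Finset V) (ξ : V → ℝ) : Measurable (hamil J β Λ ξ) := by
  unfold hamil
  refine Measurable.const_mul (Measurable.add (Measurable.const_mul ?_ _) ?_) _
  · refine Finset.measurable_sum _ (fun x _ => Finset.measurable_sum _ (fun y _ => ?_))
    by_cases hxy : x.1 = y.1
    · simp [hxy]
    · simp only [ne_eq, hxy, not_false_eq_true, if_true]; fun_prop
  · fun_prop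

lemma gibbs_eq [IsProbabilityMeasure ρ] (Λ : Finset V) (ξ : V → ℝ) :
    gibbs J β ρ Λ ξ = (NU J β ρ Λ (hb J Λ ξ)).map (restrictTo Λ) := by
  have hm : Measurable fun φ => ENNReal.ofReal (Real.exp (hamil J β Λ ξ φ)) :=
    ENNReal.measurable_ofReal.comp (Real.measurable_exp.comp (measurable_hamil Λ ξ))
  have key : (Measure.pi fun _ : ↥Λ => ρ).withDensity
      (fun φ => ENNReal.ofReal (Real.exp (hamil J β Λ ξ φ))) =
      ((PP V ρ).withDensity (WV J β Λ (hb J Λ ξ))).map (restrictTo Λ) := by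
    ext s hs
    rw [Measure.map_apply (measurable_restrictTo Λ) hs, withDensity_apply _ hs,
      withDensity_apply _ (measurable_restrictTo Λ hs), ← map_PP ρ Λ,
      setLIntegral_map hs hm (measurable_restrictTo Λ)]
    simp_rw [WV_eq_hamil]
  unfold gibbs NU
  rw [key, Measure.map_smul, Measure.map_apply (measurable_restrictTo Λ) MeasurableSet.univ,
    Set.preimage_univ, withDensity_apply _ MeasurableSet.univ, setLIntegral_univ]

lemma marg_gibbs [IsProbabilityMeasure ρ] {Λ' Λ : Finset V} (h : Λ' ⊆ Λ) (ξ : V → ℝ) :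
    marg h (gibbs J β ρ Λ ξ) = (NU J β ρ Λ (hb J Λ ξ)).map (restrictTo Λ') := by
  unfold marg
  rw [gibbs_eq, Measure.map_map (by fun_prop) (measurable_restrictTo Λ)]
  rfl

/-- The single-site weight. -/
noncomputable def kk (a0 K M : ℝ) (ρ : Measure ℝ) (u : ℝ) : ℝ≥0∞ :=
  ENNReal.ofReal (Real.exp (a0 * (max |u| K) ^ 2)) * (ρ {u | |u| ≤ M})⁻¹

/-- The constants are good. -/
structure Cst (J : V → V → ℝ) (f : ℝ → ℝ) (Mf β : ℝ) (ρ : Measure ℝ) (lam : ℝ) (M K0 : ℝ) : Prop where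
  hM : 0 ≤ M
  hMK : M ≤ K0
  hK1 : 1 ≤ K0
  hc : ρ {u | |u| ≤ M} ≠ 0
  hb : ∀ (ξ : V → ℝ) (Λ Δ : Finset V) (K : ℝ), K0 ≤ K → Δ ⊆ Λ → Fld J f lam ξ Λ Δ K →
    ∀ G : (V → ℝ) → ℝ≥0∞, Measurable G → DependsOn G (Δ : Set V) →
    ∫⁻ φ, G φ ∂(NU J β ρ Λ (hb J Λ ξ)) ≤
      2 ^ Δ.card * ∫⁻ φ, G φ * ∏ z ∈ Δ, kk (2 * β * Mf * lam) K M ρ (φ z) ∂(PP V ρ)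

lemma SetupP.cst (H : SetupP J f δf Mf β ρ lam) : ∃ M K0, Cst J f Mf β ρ lam M K0 := by
  obtain ⟨M, K0, v, hM, hMK, hK1, hc, hv, hvS, hw⟩ := H.consts
  refine ⟨M, K0, hM, hMK, hK1, hc, ?_⟩
  intro ξ Λ Δ K hK hΔ hF G hG hGd
  let X : Ctx V := ⟨J, f, β, lam, Mf, ρ, Λ, Δ, hb J Λ ξ, Sout J f Λ, K, M, v⟩
  have hX : X.Good :=
    { prob := H.prob, hJsymm := H.hJsymm, hf1 := H.hf1, hβ := H.hβ, hlam := H.hlam, hM := hM,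
      hMK := hMK.trans hK, hc := hc, hSo := H.Sout_nonneg Λ, hS := fun x _ => H.sum_Sout Λ x,
      hfield := hF, hv0 := hv, hvS := hvS, hw := hw K hK }
  have := hX.main hΔ G hG hGd
  rw [lintegral_NU Λ _ G hG]
  calc _ ≤ (∫⁻ φ, WV J β Λ (hb J Λ ξ) φ ∂(PP V ρ))⁻¹ *
        (((∫⁻ φ, WV J β Λ (hb J Λ ξ) φ ∂(PP V ρ)) * 2 ^ Δ.card) *
        ∫⁻ φ, G φ * ∏ z ∈ Δ, kk (2 * β * Mf * lam) K M ρ (φ z) ∂(PP V ρ)) := by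
        gcongr
        exact this
    _ = ((∫⁻ φ, WV J β Λ (hb J Λ ξ) φ ∂(PP V ρ))⁻¹ *
        (∫⁻ φ, WV J β Λ (hb J Λ ξ) φ ∂(PP V ρ))) * (2 ^ Δ.card *
        ∫⁻ φ, G φ * ∏ z ∈ Δ, kk (2 * β * Mf * lam) K M ρ (φ z) ∂(PP V ρ)) := by ring
    _ = _ := by rw [ENNReal.inv_mul_cancel (H.Z_ne_zero Λ _) (H.Z_ne_top Λ _), one_mul]

end


/-! ### Regularity and moments in finite volume -/

section
variable {V : Type*} {J : V → V → ℝ} {f : ℝ → ℝ} {δf Mf β : ℝ} {ρ : Measure ℝ} {lam : ℝ}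

lemma pi_rhoMod [IsProbabilityMeasure ρ] (a : ℝ)
    (hZ : ∫⁻ u, ENNReal.ofReal (Real.exp (a * u ^ 2)) ∂ρ ≠ ⊤) (Δ : Finset V) :
    Measure.pi (fun _ : ↥Δ => rhoMod ρ a) =
      ((PP V ρ).withDensity (fun φ => ∏ z ∈ Δ, ENNReal.ofReal (Real.exp (a * φ z ^ 2)))).map
        (restrictTo Δ) := by
  have hfin : IsFiniteMeasure (rhoMod ρ a) := by
    unfold rhoMod; exact isFiniteMeasure_withDensity hZ
  refine Measure.pi_eq fun s hs => ?_
  have hS : MeasurableSet (Set.univ.pi s) := MeasurableSet.univ_pi hs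
  rw [Measure.map_apply (measurable_restrictTo Δ) hS,
    withDensity_apply _ (measurable_restrictTo Δ hS),
    ← lintegral_indicator (measurable_restrictTo Δ hS)]
  let g : V → ℝ → ℝ≥0∞ := fun z => if h : z ∈ Δ then
    (s ⟨z, h⟩).indicator (fun u => ENNReal.ofReal (Real.exp (a * u ^ 2))) else fun _ => 1
  have hg : ∀ z, Measurable (g z) := by
    intro z
    simp only [g]
    split_ifs with h
    · exact Measurable.indicator (by fun_prop) (hs _)
    · exact measurable_const
  have e : ∀ φ : V → ℝ, (restrictTo Δ ⁻¹' Set.univ.pi s).indicator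
      (fun φ => ∏ z ∈ Δ, ENNReal.ofReal (Real.exp (a * φ z ^ 2))) φ = ∏ z ∈ Δ, g z (φ z) := by
    intro φ
    by_cases hφ' : φ ∈ restrictTo Δ ⁻¹' Set.univ.pi s
    · have hφ : restrictTo Δ φ ∈ Set.univ.pi s := hφ'
      rw [Set.indicator_of_mem hφ']
      refine Finset.prod_congr rfl fun z hz => ?_
      simp only [g, hz, dif_pos]
      rw [Set.indicator_of_mem]
      exact hφ ⟨z, hz⟩ trivial
    · have hφ : ¬ restrictTo Δ φ ∈ Set.univ.pi s := hφ'
      rw [Set.indicator_of_notMem hφ']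
      simp only [Set.mem_pi, Set.mem_univ, true_implies, not_forall] at hφ
      obtain ⟨z, hz⟩ := hφ
      symm
      apply Finset.prod_eq_zero z.2
      simp only [g, z.2, dif_pos]
      rw [Set.indicator_of_notMem]
      exact hz
  simp_rw [e]
  rw [lintegral_coord_prod ρ Δ g hg, ← Finset.prod_coe_sort Δ]
  refine Finset.prod_congr rfl fun z _ => ?_
  unfold rhoMod
  rw [withDensity_apply _ (hs z), ← lintegral_indicator (hs z)]
  simp only [g, z.2, dif_pos]

lemma SetupP.Za_fin (H : SetupP J f δf Mf β ρ lam) (a : ℝ) (ha : 0 ≤ a) :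
    ∫⁻ u, ENNReal.ofReal (Real.exp (a * u ^ 2)) ∂ρ ≠ ⊤ := by
  have := H.prob
  rcases ha.eq_or_lt with h | h
  · subst h; simp
  · exact (H.hρ a h).ne

lemma SetupP.one_le_Za (H : SetupP J f δf Mf β ρ lam) (a : ℝ) (ha : 0 ≤ a) :
    1 ≤ ∫⁻ u, ENNReal.ofReal (Real.exp (a * u ^ 2)) ∂ρ := by
  have := H.prob
  calc (1 : ℝ≥0∞) = ∫⁻ _u, 1 ∂ρ := by simp
    _ ≤ _ := lintegral_mono fun u => by
      rw [← ENNReal.ofReal_one]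
      exact ENNReal.ofReal_le_ofReal (Real.one_le_exp (by positivity))

lemma kk_le (a0 a K M : ℝ) (ha0 : 0 ≤ a0) (ha : a0 ≤ a) (u : ℝ) :
    kk a0 K M ρ u ≤ (ENNReal.ofReal (Real.exp (a0 * K ^ 2)) * (ρ {u | |u| ≤ M})⁻¹) *
      ENNReal.ofReal (Real.exp (a * u ^ 2)) := by
  unfold kk
  rw [mul_right_comm]
  gcongr
  rw [← ENNReal.ofReal_mul (Real.exp_pos _).le, ← Real.exp_add]
  refine ENNReal.ofReal_le_ofReal (Real.exp_le_exp.2 ?_)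
  have : (max |u| K) ^ 2 ≤ u ^ 2 + K ^ 2 := by
    rcases max_cases |u| K with ⟨h, _⟩ | ⟨h, _⟩ <;> rw [h]
    · rw [sq_abs]; nlinarith [sq_nonneg K]
    · nlinarith [sq_nonneg u]
  nlinarith [sq_nonneg u]

lemma SetupP.a0_nonneg (H : SetupP J f δf Mf β ρ lam) : 0 ≤ 2 * β * Mf * lam := by
  have := H.hβ; have := H.hMf; have := H.hlam; positivity

lemma SetupP.reg (H : SetupP J f δf Mf β ρ lam) {M K0 : ℝ} (hC : Cst J f Mf β ρ lam M K0)
    (a : ℝ) (ha : 2 * β * Mf * lam ≤ a) (K : ℝ) (hK : K0 ≤ K) :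
    ∃ B : ℝ, 0 ≤ B ∧ ∀ (ξ : V → ℝ) (Λ Δ : Finset V), Δ ⊆ Λ → Fld J f lam ξ Λ Δ K →
      (NU J β ρ Λ (hb J Λ ξ)).map (restrictTo Δ) ≤
        ENNReal.ofReal (Real.exp (B * Δ.card)) • prodN (rhoMod ρ a) Δ := by
  have := H.prob
  have ha0 := H.a0_nonneg
  have ha' : 0 ≤ a := ha0.trans ha
  set Ck := ENNReal.ofReal (Real.exp ((2 * β * Mf * lam) * K ^ 2)) * (ρ {u | |u| ≤ M})⁻¹ with hCk
  set Za := ∫⁻ u, ENNReal.ofReal (Real.exp (a * u ^ 2)) ∂ρ with hZa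
  have hZ1 : 1 ≤ Za := H.one_le_Za a ha'
  have hZt : Za ≠ ⊤ := H.Za_fin a ha'
  have hCk1 : 1 ≤ Ck := by
    refine one_le_mul ?_ ?_
    · rw [← ENNReal.ofReal_one]
      exact ENNReal.ofReal_le_ofReal (Real.one_le_exp (by positivity))
    · rw [ENNReal.one_le_inv]; exact prob_le_one
  have hCkt : Ck ≠ ⊤ := ENNReal.mul_ne_top ENNReal.ofReal_ne_top (ENNReal.inv_ne_top.2 hC.hc)
  set E := 2 * Ck * Za with hE
  have hE1 : 1 ≤ E := one_le_mul (one_le_mul (by norm_num) hCk1) hZ1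
  have hEt : E ≠ ⊤ := ENNReal.mul_ne_top (ENNReal.mul_ne_top (by norm_num) hCkt) hZt
  have hEr : 1 ≤ E.toReal := by
    rw [← ENNReal.toReal_one]
    exact ENNReal.toReal_mono hEt hE1
  refine ⟨Real.log E.toReal, Real.log_nonneg hEr, ?_⟩
  intro ξ Λ Δ hΔ hF
  have hexp : ENNReal.ofReal (Real.exp (Real.log E.toReal * Δ.card)) = E ^ Δ.card := by
    rw [mul_comm, Real.exp_nat_mul, Real.exp_log (by linarith), ENNReal.ofReal_pow (by linarith),
      ENNReal.ofReal_toReal hEt]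
  have hpi := pi_rhoMod (V := V) a hZt Δ
  have hmass : Measure.pi (fun _ : ↥Δ => rhoMod ρ a) Set.univ = Za ^ Δ.card := by
    rw [hpi, Measure.map_apply (measurable_restrictTo Δ) MeasurableSet.univ, Set.preimage_univ,
      withDensity_apply _ MeasurableSet.univ, setLIntegral_univ,
      lintegral_coord_prod ρ Δ (fun _ u => ENNReal.ofReal (Real.exp (a * u ^ 2)))
        (fun _ => by fun_prop), Finset.prod_const]
  unfold prodN
  rw [hexp, hmass, Measure.le_iff]
  intro s hs
  rw [Measure.smul_apply, Measure.smul_apply, hpi, Measure.map_apply (measurable_restrictTo Δ) hs,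
    Measure.map_apply (measurable_restrictTo Δ) hs,
    withDensity_apply _ (measurable_restrictTo Δ hs), smul_eq_mul, smul_eq_mul, ← mul_assoc]
  have hms := measurable_restrictTo Δ hs
  have hcoef : E ^ Δ.card * (Za ^ Δ.card)⁻¹ = 2 ^ Δ.card * Ck ^ Δ.card := by
    rw [hE, mul_pow, mul_pow, mul_assoc, ENNReal.mul_inv_cancel, mul_one]
    · exact pow_ne_zero _ (by positivity)
    · exact ENNReal.pow_ne_top hZt
  rw [hcoef]
  have hmain := hC.hb ξ Λ Δ K hK hΔ hF ((restrictTo Δ ⁻¹' s).indicator 1)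
    (measurable_one.indicator hms) (by
      intro φ ψ h
      have : restrictTo Δ φ = restrictTo Δ ψ := by
        funext x; exact h x.1 x.2
      simp only [Set.indicator, Set.mem_preimage, this, Pi.one_apply])
  rw [lintegral_indicator_one hms] at hmain
  refine hmain.trans ?_
  rw [mul_assoc (2 ^ Δ.card) (Ck ^ Δ.card)]
  refine mul_le_mul_right ?_ (2 ^ Δ.card)
  rw [← lintegral_indicator hms, ← lintegral_const_mul _
    (Measurable.indicator (by fun_prop) hms)]
  refine lintegral_mono fun φ => ?_
  by_cases hφ : φ ∈ restrictTo Δ ⁻¹' s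
  · simp only [Set.indicator_of_mem hφ, Pi.one_apply, one_mul]
    rw [← Finset.prod_const, ← Finset.prod_mul_distrib]
    exact Finset.prod_le_prod' fun z _ => kk_le _ a K M ha0 ha (φ z)
  · simp only [Set.indicator_of_notMem hφ, zero_mul, mul_zero, le_refl]

lemma SetupP.moment (H : SetupP J f δf Mf β ρ lam) {M K0 : ℝ} (hC : Cst J f Mf β ρ lam M K0) :
    ∃ C1 : ℝ, 0 ≤ C1 ∧ ∀ (ξ : V → ℝ) (Λ : Finset V) (y : V) (K : ℝ), y ∈ Λ → K0 ≤ K →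
      Fld J f lam ξ Λ {y} K →
      ∫⁻ φ, ENNReal.ofReal |φ y| ∂(NU J β ρ Λ (hb J Λ ξ)) ≤ ENNReal.ofReal (K + C1) := by
  have := H.prob
  have ha0 := H.a0_nonneg
  set a0 := 2 * β * Mf * lam with ha0d
  set C2 := 2 * ((∫⁻ u, ENNReal.ofReal (Real.exp ((a0 + 1) * u ^ 2)) ∂ρ) * (ρ {u | |u| ≤ M})⁻¹)
    with hC2
  have hC2t : C2 ≠ ⊤ := ENNReal.mul_ne_top (by norm_num) (ENNReal.mul_ne_top
    (H.Za_fin _ (by linarith)) (ENNReal.inv_ne_top.2 hC.hc))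
  refine ⟨C2.toReal, ENNReal.toReal_nonneg, ?_⟩
  intro ξ Λ y K hy hK hF
  have hp := H.NU_prob Λ (hb J Λ ξ)
  have hK0 : 0 ≤ K := by linarith [hC.hK1]
  rw [ENNReal.ofReal_add hK0 ENNReal.toReal_nonneg, ENNReal.ofReal_toReal hC2t]
  let g : ℝ → ℝ≥0∞ := {u : ℝ | K < |u|}.indicator (fun u => ENNReal.ofReal |u|)
  have hgm : Measurable g := by
    refine Measurable.indicator (by fun_prop) ?_
    exact measurableSet_lt measurable_const (by fun_prop)
  have hle : ∀ u : ℝ, ENNReal.ofReal |u| ≤ ENNReal.ofReal K + g u := by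
    intro u
    by_cases h : K < |u|
    · simp only [g]
      rw [Set.indicator_of_mem (show u ∈ {u : ℝ | K < |u|} from h)]
      exact le_add_self
    · exact (ENNReal.ofReal_le_ofReal (not_lt.1 h)).trans le_self_add
  calc ∫⁻ φ, ENNReal.ofReal |φ y| ∂(NU J β ρ Λ (hb J Λ ξ))
      ≤ ∫⁻ φ, (ENNReal.ofReal K + g (φ y)) ∂(NU J β ρ Λ (hb J Λ ξ)) :=
        lintegral_mono fun φ => hle (φ y)
    _ = ENNReal.ofReal K + ∫⁻ φ, g (φ y) ∂(NU J β ρ Λ (hb J Λ ξ)) := by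
        rw [lintegral_add_left measurable_const]; simp
    _ ≤ ENNReal.ofReal K + C2 := ?_
  gcongr
  have hmain := hC.hb ξ Λ {y} K hK (by simpa using hy) hF (fun φ => g (φ y))
    (hgm.comp (measurable_pi_apply y)) (by
      intro φ ψ h; simp only; rw [h y (by simp)])
  refine hmain.trans ?_
  simp only [Finset.card_singleton, pow_one, Finset.prod_singleton]
  rw [hC2, ← lintegral_mul_const _ (by fun_prop)]
  gcongr
  rw [← lintegral_coord ρ y _ (by fun_prop)]
  refine lintegral_mono fun φ => ?_
  simp only [g, kk]
  by_cases h : K < |φ y|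
  · rw [Set.indicator_of_mem (show φ y ∈ {u : ℝ | K < |u|} from h), ← mul_assoc,
      max_eq_left h.le, sq_abs, ← ENNReal.ofReal_mul (abs_nonneg _)]
    gcongr
    rw [add_mul, one_mul, Real.exp_add, mul_comm]
    gcongr
    have := Real.add_one_le_exp ((φ y)^2)
    rw [abs_le]; constructor <;> nlinarith [sq_nonneg (φ y - 1), sq_nonneg (φ y + 1)]
  · rw [Set.indicator_of_notMem (show φ y ∉ {u : ℝ | K < |u|} from h)]
    simp

end


/-! ### The specification kernel and finite-volume DLR -/

section
variable {V : Type*} {J : V → V → ℝ} {f : ℝ → ℝ} {δf Mf β : ℝ} {ρ : Measure ℝ} {lam : ℝ}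

/-- Effective field on `Λ` inside `Λ'`. -/
noncomputable def Xf (J : V → V → ℝ) (Λ Λ' : Finset V) (h φ : V → ℝ) (x : V) : ℝ :=
  ∑ y ∈ Λ' \ Λ, J x y * φ y + h x

/-- Extension by zero. -/
noncomputable def ext0 (Λ : Finset V) (h : ↥Λ → ℝ) (x : V) : ℝ :=
  if hx : x ∈ Λ then h ⟨x, hx⟩ else 0

lemma ext0_mem (Λ : Finset V) (h : ↥Λ → ℝ) {x : V} (hx : x ∈ Λ) : ext0 Λ h x = h ⟨x, hx⟩ := by
  simp [ext0, hx]

lemma HV_field_congr (Λ : Finset V) {h h' : V → ℝ} (e : ∀ x ∈ Λ, h x = h' x) :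
    HV J β Λ h = HV J β Λ h' := by
  funext φ
  unfold HV
  congr 2
  exact Finset.sum_congr rfl fun x hx => by rw [e x hx]

lemma WV_field_congr (Λ : Finset V) {h h' : V → ℝ} (e : ∀ x ∈ Λ, h x = h' x) :
    WV J β Λ h = WV J β Λ h' := by
  funext φ
  unfold WV; rw [HV_field_congr Λ e]

lemma NU_congr (Λ : Finset V) {h h' : V → ℝ} (e : ∀ x ∈ Λ, h x = h' x) :
    NU J β ρ Λ h = NU J β ρ Λ h' := by
  unfold NU; rw [WV_field_congr Λ e]

lemma measurable_HV_joint {α : Type*} [MeasurableSpace α] (Λ : Finset V) (X : α → V → ℝ)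
    (hX : ∀ x, Measurable fun a => X a x) :
    Measurable fun p : α × (V → ℝ) => HV J β Λ (X p.1) p.2 := by
  unfold HV
  refine Measurable.const_mul (Measurable.add (Measurable.const_mul ?_ _) ?_) _
  · refine Finset.measurable_sum _ (fun x _ => Finset.measurable_sum _ (fun y _ => ?_))
    by_cases hxy : x = y
    · simp [hxy]
    · simp only [ne_eq, hxy, not_false_eq_true, if_true]; fun_prop
  · refine Finset.measurable_sum _ fun x _ => Measurable.mul (by fun_prop) ?_
    exact (hX x).comp measurable_fst

lemma measurable_WV_joint {α : Type*} [MeasurableSpace α] (Λ : Finset V) (X : α → V → ℝ)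
    (hX : ∀ x, Measurable fun a => X a x) :
    Measurable fun p : α × (V → ℝ) => WV J β Λ (X p.1) p.2 :=
  ENNReal.measurable_ofReal.comp (Real.measurable_exp.comp (measurable_HV_joint Λ X hX))

lemma measurable_lintegral_NU [IsProbabilityMeasure ρ] {α : Type*} [MeasurableSpace α]
    (Λ : Finset V) (X : α → V → ℝ) (hX : ∀ x, Measurable fun a => X a x)
    (G : (V → ℝ) → ℝ≥0∞) (hG : Measurable G) :
    Measurable fun a => ∫⁻ φ, G φ ∂(NU J β ρ Λ (X a)) := by
  simp_rw [lintegral_NU Λ _ G hG]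
  refine Measurable.mul (Measurable.inv ?_) ?_
  · exact (measurable_WV_joint Λ X hX).lintegral_prod_right'
  · exact ((hG.comp measurable_snd).mul (measurable_WV_joint Λ X hX)).lintegral_prod_right'

lemma HV_split (hJsymm : ∀ x y, J x y = J y x) {Λ Λ' : Finset V} (hsub : Λ ⊆ Λ') (h ψ φ : V → ℝ) :
    HV J β Λ' h (spl (Λ : Set V) ψ φ) =
      HV J β Λ (Xf J Λ Λ' h φ) ψ + HV J β (Λ' \ Λ) h φ := by
  set χ := spl (Λ : Set V) ψ φ with hχ
  have c1 : ∀ x ∈ Λ, χ x = ψ x := fun x hx => spl_of_mem hx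
  have c2 : ∀ x ∈ Λ' \ Λ, χ x = φ x := fun x hx =>
    spl_of_not_mem (by simpa using (Finset.mem_sdiff.1 hx).2)
  have hd : Disjoint Λ (Λ' \ Λ) := Finset.disjoint_sdiff
  set U := Λ' \ Λ with hU
  have hΛ' : Λ' = Λ ∪ U := (Finset.union_sdiff_of_subset hsub).symm
  set T : V → V → ℝ := fun x y => if x ≠ y then J x y * χ x * χ y else 0 with hT
  have hTsymm : ∀ x y, T x y = T y x := by
    intro x y
    simp only [hT]
    by_cases hxy : x = y
    · simp [hxy]
    · have : y ≠ x := fun h => hxy h.symm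
      simp only [hxy, this, ne_eq, not_false_eq_true, if_true]
      rw [hJsymm x y]; ring
  have e0 : HV J β (Λ' \ Λ) h φ = HV J β U h χ :=
    (HV_congr J β U h) (fun x hx => (c2 x hx).symm)
  have e1 : HV J β Λ (Xf J Λ Λ' h φ) ψ = HV J β Λ (Xf J Λ Λ' h φ) χ :=
    (HV_congr J β Λ _) (fun x hx => (c1 x hx).symm)
  rw [e0, e1, hΛ']
  have e2 : ∑ x ∈ U, ∑ y ∈ Λ, T x y = ∑ x ∈ Λ, ∑ y ∈ U, T x y := by
    rw [Finset.sum_comm]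
    exact Finset.sum_congr rfl (fun x _ => Finset.sum_congr rfl (fun y _ => hTsymm _ _))
  have e3 : ∑ x ∈ Λ, χ x * Xf J Λ (Λ ∪ U) h φ x =
      ∑ x ∈ Λ, ∑ y ∈ U, T x y + ∑ x ∈ Λ, χ x * h x := by
    rw [← Finset.sum_add_distrib]
    refine Finset.sum_congr rfl fun x hx => ?_
    unfold Xf
    rw [← hΛ', ← hU, mul_add, Finset.mul_sum]
    congr 1
    refine Finset.sum_congr rfl fun y hy => ?_
    have hne : x ≠ y := fun e => (Finset.disjoint_left.1 hd hx) (e ▸ hy)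
    simp only [hT, hne, ne_eq, not_false_eq_true, if_true]
    rw [c2 y hy]; ring
  unfold HV
  rw [e3]
  simp only [Finset.sum_union hd, Finset.sum_add_distrib]
  change β * (1 / 2 * (∑ x ∈ Λ, ∑ y ∈ Λ, T x y + ∑ x ∈ Λ, ∑ y ∈ U, T x y +
      (∑ x ∈ U, ∑ y ∈ Λ, T x y + ∑ x ∈ U, ∑ y ∈ U, T x y)) + _) =
      β * (1 / 2 * (∑ x ∈ Λ, ∑ y ∈ Λ, T x y) + _) + β * (1 / 2 * (∑ x ∈ U, ∑ y ∈ U, T x y) + _)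
  rw [e2]; ring

lemma Xf_spl (Λ Λ' : Finset V) (h ψ φ : V → ℝ) :
    Xf J Λ Λ' h (spl (Λ : Set V) ψ φ) = Xf J Λ Λ' h φ := by
  funext x
  unfold Xf
  congr 1
  refine Finset.sum_congr rfl fun y hy => ?_
  rw [spl_of_not_mem (by simpa using (Finset.mem_sdiff.1 hy).2)]

lemma measurable_Xf (Λ Λ' : Finset V) (h : V → ℝ) (x : V) :
    Measurable fun φ => Xf J Λ Λ' h φ x := by
  unfold Xf; fun_prop

lemma SetupP.dlr_fin (H : SetupP J f δf Mf β ρ lam) {Λ Λ' : Finset V} (hsub : Λ ⊆ Λ')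
    (h : V → ℝ) (G : (↥Λ → ℝ) → ℝ≥0∞) (hG : Measurable G) :
    ∫⁻ φ, G (restrictTo Λ φ) ∂(NU J β ρ Λ' h) =
      ∫⁻ φ, (∫⁻ ψ, G (restrictTo Λ ψ) ∂(NU J β ρ Λ (Xf J Λ Λ' h φ))) ∂(NU J β ρ Λ' h) := by
  have := H.prob
  have hGm : Measurable fun φ : V → ℝ => G (restrictTo Λ φ) := hG.comp (measurable_restrictTo Λ)
  have hInner : Measurable fun φ => ∫⁻ ψ, G (restrictTo Λ ψ) ∂(NU J β ρ Λ (Xf J Λ Λ' h φ)) :=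
    measurable_lintegral_NU Λ (fun φ => Xf J Λ Λ' h φ) (measurable_Xf Λ Λ' h) _ hGm
  rw [lintegral_NU Λ' h _ hGm, lintegral_NU Λ' h _ hInner]
  congr 1
  rw [lintegral_spl ρ (Λ : Set V) (fun φ => G (restrictTo Λ φ) * WV J β Λ' h φ) (hGm.mul (measurable_WV J β Λ' h)),
    lintegral_spl ρ (Λ : Set V)
      (fun φ => (∫⁻ ψ, G (restrictTo Λ ψ) ∂(NU J β ρ Λ (Xf J Λ Λ' h φ))) * WV J β Λ' h φ)
      (hInner.mul (measurable_WV J β Λ' h))]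
  refine lintegral_congr fun φ => ?_
  have hW : ∀ ψ, WV J β Λ' h (spl (Λ : Set V) ψ φ) =
      WV J β Λ (Xf J Λ Λ' h φ) ψ * WV J β (Λ' \ Λ) h φ := by
    intro ψ
    unfold WV
    rw [HV_split H.hJsymm hsub, Real.exp_add, ENNReal.ofReal_mul (Real.exp_pos _).le]
  have hr : ∀ ψ, restrictTo Λ (spl (Λ : Set V) ψ φ) = restrictTo Λ ψ := by
    intro ψ; funext x; exact spl_of_mem x.2
  simp only [Xf_spl, hW, hr, ← mul_assoc]
  rw [lintegral_mul_const (f := fun ψ => G (restrictTo Λ ψ) * WV J β Λ (Xf J Λ Λ' h φ) ψ) _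
    (hGm.mul (measurable_WV J β Λ _)),
    lintegral_mul_const _ ((measurable_WV J β Λ _).const_mul _),
    lintegral_const_mul _ (measurable_WV J β Λ _), lintegral_NU Λ _ _ hGm]
  congr 1
  rw [mul_comm, ← mul_assoc, ENNReal.mul_inv_cancel (H.Z_ne_zero Λ _) (H.Z_ne_top Λ _), one_mul]

/-- The specification kernel on `Λ` as a function of the external field. -/
noncomputable def kap (J : V → V → ℝ) (β : ℝ) (ρ : Measure ℝ) [IsProbabilityMeasure ρ]
    (Λ : Finset V) : ProbabilityTheory.Kernel (↥Λ → ℝ) (↥Λ → ℝ) where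
  toFun h := (NU J β ρ Λ (ext0 Λ h)).map (restrictTo Λ)
  measurable' := by
    refine Measure.measurable_of_measurable_coe _ fun s hs => ?_
    have : ∀ h : ↥Λ → ℝ, (NU J β ρ Λ (ext0 Λ h)).map (restrictTo Λ) s =
        ∫⁻ φ, (restrictTo Λ ⁻¹' s).indicator 1 φ ∂(NU J β ρ Λ (ext0 Λ h)) := by
      intro h
      rw [Measure.map_apply (measurable_restrictTo Λ) hs,
        lintegral_indicator_one (measurable_restrictTo Λ hs)]
    simp_rw [this]
    refine measurable_lintegral_NU Λ (fun h => ext0 Λ h) (fun x => ?_) _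
      (measurable_one.indicator (measurable_restrictTo Λ hs))
    unfold ext0
    split_ifs <;> fun_prop

lemma kap_apply [IsProbabilityMeasure ρ] (Λ : Finset V) (h : ↥Λ → ℝ) :
    kap J β ρ Λ h = (NU J β ρ Λ (ext0 Λ h)).map (restrictTo Λ) := rfl

lemma SetupP.kap_markov (H : SetupP J f δf Mf β ρ lam) [IsProbabilityMeasure ρ] (Λ : Finset V) :
    ProbabilityTheory.IsMarkovKernel (kap J β ρ Λ) := by
  constructor
  intro h
  rw [kap_apply]
  have := H.NU_prob Λ (ext0 Λ h)
  exact Measure.isProbabilityMeasure_map (measurable_restrictTo Λ).aemeasurable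

lemma kap_restrict [IsProbabilityMeasure ρ] (Λ : Finset V) (h : V → ℝ) :
    kap J β ρ Λ (restrictTo Λ h) = (NU J β ρ Λ h).map (restrictTo Λ) := by
  rw [kap_apply, NU_congr Λ (h' := h)]
  intro x hx
  rw [ext0_mem Λ _ hx, restrictTo]

lemma SetupP.dlr_fin_bind (H : SetupP J f δf Mf β ρ lam) [IsProbabilityMeasure ρ]
    {Λ Λ' : Finset V} (hsub : Λ ⊆ Λ') (h : V → ℝ) :
    (NU J β ρ Λ' h).map (restrictTo Λ) =
      ((NU J β ρ Λ' h).map fun φ => restrictTo Λ (Xf J Λ Λ' h φ)).bind (kap J β ρ Λ) := by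
  have hXm : Measurable fun φ => restrictTo Λ (Xf J Λ Λ' h φ) := by
    rw [measurable_pi_iff]; intro x; exact measurable_Xf Λ Λ' h x.1
  ext s hs
  rw [Measure.bind_apply hs (kap J β ρ Λ).measurable.aemeasurable,
    lintegral_map ((kap J β ρ Λ).measurable_coe hs) hXm,
    ← lintegral_indicator_one hs,
    lintegral_map (measurable_one.indicator hs) (measurable_restrictTo Λ),
    H.dlr_fin hsub h _ (measurable_one.indicator hs)]
  refine lintegral_congr fun φ => ?_
  rw [kap_restrict, ← lintegral_map (measurable_one.indicator hs) (measurable_restrictTo Λ),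
    lintegral_indicator_one hs]

lemma integral_bind_kernel {α γ : Type*} [MeasurableSpace α] [MeasurableSpace γ]
    (κ : ProbabilityTheory.Kernel α γ) [ProbabilityTheory.IsMarkovKernel κ] (m : Measure α)
    [IsProbabilityMeasure m] (g : γ → ℝ) (hg : Measurable g) (C : ℝ) (hC : ∀ x, |g x| ≤ C) :
    ∫ x, g x ∂(m.bind κ) = ∫ a, ∫ x, g x ∂(κ a) ∂m := by
  have h1 : (κ.comp (ProbabilityTheory.Kernel.const Unit m)) () = m.bind κ := by
    rw [ProbabilityTheory.Kernel.comp_const, ProbabilityTheory.Kernel.const_apply]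
  rw [← h1, ProbabilityTheory.Kernel.integral_comp]
  · simp
  · exact Integrable.of_bound hg.aestronglyMeasurable C (ae_of_all _ hC)

end


/-! ### Continuity of the specification; comparison of measures -/

section
variable {V : Type*} {J : V → V → ℝ} {f : ℝ → ℝ} {δf Mf β : ℝ} {ρ : Measure ℝ} {lam : ℝ}

lemma integral_NU (Λ : Finset V) (h : V → ℝ) (G : (V → ℝ) → ℝ) :
    ∫ φ, G φ ∂(NU J β ρ Λ h) =
      (∫ φ, Real.exp (HV J β Λ h φ) ∂(PP V ρ))⁻¹ *
        ∫ φ, Real.exp (HV J β Λ h φ) * G φ ∂(PP V ρ) := by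
  unfold NU
  rw [integral_smul_measure, integral_withDensity_eq_integral_toReal_smul (measurable_WV J β Λ h)
    (ae_of_all _ fun φ => by unfold WV; exact ENNReal.ofReal_lt_top)]
  rw [smul_eq_mul, ENNReal.toReal_inv]
  have e : ∀ φ, (WV J β Λ h φ).toReal = Real.exp (HV J β Λ h φ) := fun φ => by
    unfold WV; rw [ENNReal.toReal_ofReal (Real.exp_pos _).le]
  simp_rw [e, smul_eq_mul]
  congr 2
  unfold WV
  rw [integral_eq_lintegral_of_nonneg_ae (ae_of_all _ fun φ => (Real.exp_pos _).le)
    (Real.measurable_exp.comp (measurable_HV J β Λ h)).aestronglyMeasurable]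

lemma continuous_ext0 (Λ : Finset V) (x : V) : Continuous fun h : ↥Λ → ℝ => ext0 Λ h x := by
  unfold ext0
  split_ifs <;> fun_prop

lemma SetupP.cont_num (H : SetupP J f δf Mf β ρ lam) (Λ : Finset V)
    (G : (V → ℝ) → ℝ) (hG : Measurable G) (C : ℝ) (hC : ∀ φ, |G φ| ≤ C) :
    Continuous fun h : ↥Λ → ℝ => ∫ φ, Real.exp (HV J β Λ (ext0 Λ h) φ) * G φ ∂(PP V ρ) := by
  have := H.prob
  rw [continuous_iff_continuousAt]
  intro h0
  set R := ‖h0‖ + 1 with hR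
  have hR0 : 0 ≤ R := by positivity
  have hC0 : 0 ≤ C := (abs_nonneg _).trans (hC 0)
  set c := Cenv J β Λ R with hc
  refine continuousAt_of_dominated (bound := fun φ => Real.exp (∑ x ∈ Λ, c * (1 + φ x ^ 2)) * C)
    (Eventually.of_forall fun h => ?_) ?_ ?_ (ae_of_all _ fun φ => ?_)
  · exact ((Real.measurable_exp.comp (measurable_HV J β Λ _)).mul hG).aestronglyMeasurable
  · filter_upwards [Metric.ball_mem_nhds h0 one_pos] with h hh
    refine ae_of_all _ fun φ => ?_
    rw [norm_mul, Real.norm_eq_abs, Real.norm_eq_abs, abs_of_pos (Real.exp_pos _)]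
    refine mul_le_mul (Real.exp_le_exp.2 ?_) (hC φ) (abs_nonneg _) (Real.exp_pos _).le
    refine HV_le J β Λ R hR0 _ φ fun x hx => ?_
    rw [ext0_mem Λ h hx]
    have h1 : |h ⟨x, hx⟩| ≤ ‖h‖ := norm_le_pi_norm h ⟨x, hx⟩
    have h2 : ‖h‖ ≤ ‖h0‖ + ‖h - h0‖ := by
      have := norm_add_le h0 (h - h0); simpa using this
    have h3 : ‖h - h0‖ < 1 := by rw [← dist_eq_norm]; exact hh
    linarith
  · refine Integrable.mul_const ?_ C
    refine ⟨Measurable.aestronglyMeasurable (by fun_prop), ?_⟩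
    rw [hasFiniteIntegral_iff_ofReal (ae_of_all _ fun φ => (Real.exp_pos _).le)]
    refine lt_of_le_of_lt (le_of_eq ?_) (H.env_fin Λ c (Cenv_pos J β Λ R hR0))
    refine lintegral_congr fun φ => ?_
    rw [Real.exp_sum, ENNReal.ofReal_prod_of_nonneg (fun _ _ => (Real.exp_pos _).le)]
  · refine Continuous.continuousAt ?_
    refine Continuous.mul (Real.continuous_exp.comp ?_) continuous_const
    unfold HV
    refine continuous_const.mul (continuous_const.add ?_)
    exact continuous_finsetSum _ fun x _ => continuous_const.mul (continuous_ext0 Λ x)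

lemma SetupP.cont_kap (H : SetupP J f δf Mf β ρ lam) [IsProbabilityMeasure ρ] (Λ : Finset V)
    (g : (↥Λ → ℝ) → ℝ) (hg : Measurable g) (C : ℝ) (hC : ∀ φ, |g φ| ≤ C) :
    Continuous fun h : ↥Λ → ℝ => ∫ ψ, g ψ ∂(kap J β ρ Λ h) := by
  have e : ∀ h, ∫ ψ, g ψ ∂(kap J β ρ Λ h) =
      (∫ φ, Real.exp (HV J β Λ (ext0 Λ h) φ) * 1 ∂(PP V ρ))⁻¹ *
        ∫ φ, Real.exp (HV J β Λ (ext0 Λ h) φ) * g (restrictTo Λ φ) ∂(PP V ρ) := by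
    intro h
    rw [kap_apply, integral_map (measurable_restrictTo Λ).aemeasurable hg.aestronglyMeasurable,
      integral_NU]
    simp
  simp_rw [e]
  refine Continuous.mul (Continuous.inv₀ (H.cont_num Λ (fun _ => 1) measurable_const 1 (by simp))
    fun h => ?_) (H.cont_num Λ _ (hg.comp (measurable_restrictTo Λ)) C fun φ => hC _)
  simp only [mul_one]
  rw [integral_eq_lintegral_of_nonneg_ae (ae_of_all _ fun φ => (Real.exp_pos _).le)
    (Real.measurable_exp.comp (measurable_HV J β Λ _)).aestronglyMeasurable]
  exact ENNReal.toReal_ne_zero.2 ⟨H.Z_ne_zero Λ _, H.Z_ne_top Λ _⟩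

lemma measure_le_of_cont {E : Type*} [MetricSpace E] [MeasurableSpace E] [BorelSpace E]
    (μ P : Measure E) [IsFiniteMeasure μ] [IsFiniteMeasure P]
    (h : ∀ g : BoundedContinuousFunction E NNReal, ∫⁻ x, g x ∂μ ≤ ∫⁻ x, g x ∂P) : μ ≤ P := by
  have hcl : ∀ F : Set E, IsClosed F → μ F ≤ P F := by
    intro F hF
    refine ge_of_tendsto (HasOuterApproxClosed.tendsto_lintegral_apprSeq hF P)
      (Eventually.of_forall fun n => ?_)
    exact (HasOuterApproxClosed.measure_le_lintegral hF μ n).trans (h _)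
  rw [Measure.le_iff]
  intro s hs
  refine le_of_forall_pos_le_add fun ε hε => ?_
  obtain ⟨F, hFs, hF, hlt⟩ := hs.exists_isClosed_lt_add (measure_ne_top μ s) hε.ne'
  calc μ s ≤ μ F + ε := hlt.le
    _ ≤ P s + ε := add_le_add ((hcl F hF).trans (measure_mono hFs)) le_rfl

/-- Local weak convergence. -/
def LocConv (μ : ℕ → Measure (V → ℝ)) (ν : Measure (V → ℝ)) : Prop :=
  ∀ (Δ : Finset V) (g : (↥Δ → ℝ) → ℝ), Continuous g → (∃ K, ∀ ψ, |g ψ| ≤ K) →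
    Tendsto (fun i => ∫ φ, g (restrictTo Δ φ) ∂(μ i)) atTop (nhds (∫ φ, g (restrictTo Δ φ) ∂ν))

lemma LocConv.le {μ : ℕ → Measure (V → ℝ)} {ν : Measure (V → ℝ)} (hL : LocConv μ ν) [IsProbabilityMeasure ν] (Δ : Finset V)
    (P : Measure (↥Δ → ℝ)) [IsFiniteMeasure P] (h : ∀ᶠ i in atTop, (μ i).map (restrictTo Δ) ≤ P) :
    ν.map (restrictTo Δ) ≤ P := by
  have hm := measurable_restrictTo Δ
  have := Measure.isProbabilityMeasure_map (μ := ν) hm.aemeasurable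
  refine measure_le_of_cont _ _ fun g => ?_
  have hgc : Continuous fun x => (g x : ℝ) := NNReal.continuous_coe.comp g.continuous
  have hgb : ∀ x, |(g x : ℝ)| ≤ (nndist g 0 : ℝ) := by
    intro x
    rw [abs_of_nonneg (NNReal.coe_nonneg _)]
    have := BoundedContinuousFunction.NNReal.upper_bound g x
    exact_mod_cast this
  have hlim := hL Δ (fun x => (g x : ℝ)) hgc ⟨_, hgb⟩
  have key : ∫ φ, (g (restrictTo Δ φ) : ℝ) ∂ν ≤ ∫ x, (g x : ℝ) ∂P := by
    refine le_of_tendsto hlim ?_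
    filter_upwards [h] with i hi
    rw [← integral_map (φ := restrictTo Δ) (f := fun x => (g x : ℝ)) hm.aemeasurable
      hgc.aestronglyMeasurable]
    exact integral_mono_measure hi (ae_of_all _ fun x => NNReal.coe_nonneg _)
      (Integrable.of_bound hgc.aestronglyMeasurable _ (ae_of_all _ hgb))
  rw [← integral_map (φ := restrictTo Δ) (f := fun x => (g x : ℝ)) hm.aemeasurable
      hgc.aestronglyMeasurable, ← BoundedContinuousFunction.toReal_lintegral_coe_eq_integral,
      ← BoundedContinuousFunction.toReal_lintegral_coe_eq_integral] at key
  exact (ENNReal.toReal_le_toReal (BoundedContinuousFunction.lintegral_lt_top_of_nnreal _ g).ne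
    (BoundedContinuousFunction.lintegral_lt_top_of_nnreal _ g).ne).1 key

lemma LocConv.moment {μ : ℕ → Measure (V → ℝ)} {ν : Measure (V → ℝ)} (hL : LocConv μ ν)
    (hμ : ∀ i, IsProbabilityMeasure (μ i)) [IsProbabilityMeasure ν] (y : V) (D : ℝ) (hD : 0 ≤ D)
    (h : ∀ᶠ i in atTop, ∫⁻ φ, ENNReal.ofReal |φ y| ∂(μ i) ≤ ENNReal.ofReal D) :
    ∫⁻ φ, ENNReal.ofReal |φ y| ∂ν ≤ ENNReal.ofReal D := by
  have hm : ∀ n : ℕ, Measurable fun φ : V → ℝ => min |φ y| n := fun n => by fun_prop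
  have hb : ∀ n : ℕ, ∀ φ : V → ℝ, |min |φ y| n| ≤ n := by
    intro n φ
    rw [abs_of_nonneg (le_min (abs_nonneg _) (Nat.cast_nonneg _))]
    exact min_le_right _ _
  have e : ∀ φ : V → ℝ, ENNReal.ofReal |φ y| = ⨆ n : ℕ, ENNReal.ofReal (min |φ y| n) := by
    intro φ
    apply le_antisymm
    · obtain ⟨n, hn⟩ := exists_nat_ge |φ y|
      refine le_iSup_of_le n ?_
      rw [min_eq_left hn]
    · exact iSup_le fun n => ENNReal.ofReal_le_ofReal (min_le_left _ _)
  simp_rw [e]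
  rw [lintegral_iSup (fun n => (hm n).ennreal_ofReal) (by
    intro n m hnm φ
    exact ENNReal.ofReal_le_ofReal (min_le_min_left _ (by exact_mod_cast hnm)))]
  refine iSup_le fun n => ?_
  have hlim := hL {y} (fun ψ => min |ψ ⟨y, by simp⟩| (n : ℝ)) (by fun_prop) ⟨n, by
    intro ψ
    rw [abs_of_nonneg (le_min (abs_nonneg _) (Nat.cast_nonneg _))]
    exact min_le_right _ _⟩
  simp only [restrictTo] at hlim
  rw [← ofReal_integral_eq_lintegral_ofReal
    (Integrable.of_bound (hm n).aestronglyMeasurable n (ae_of_all _ (hb n)))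
    (ae_of_all _ fun φ => le_min (abs_nonneg _) (Nat.cast_nonneg _))]
  refine ENNReal.ofReal_le_ofReal (le_of_tendsto hlim ?_)
  filter_upwards [h] with i hi
  have := hμ i
  rw [integral_eq_lintegral_of_nonneg_ae
    (ae_of_all _ fun φ => le_min (abs_nonneg _) (Nat.cast_nonneg _)) (hm n).aestronglyMeasurable]
  refine ENNReal.toReal_le_of_le_ofReal hD (le_trans (lintegral_mono fun φ => ?_) hi)
  exact ENNReal.ofReal_le_ofReal (min_le_left _ _)

end


/-! ### Convergence of the effective fields -/

section
variable {V : Type*} {J : V → V → ℝ} {f : ℝ → ℝ} {δf Mf β : ℝ} {ρ : Measure ℝ} {lam : ℝ}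

/-- Uniform moment bounds. -/
def MomB (J : V → V → ℝ) (f : ℝ → ℝ) (Λs : ℕ → Finset V) (μ : ℕ → Measure (V → ℝ))
    (D : V → ℝ) : Prop :=
  ∀ x, 0 ≤ D x ∧ ∀ᶠ i in atTop, ∀ y ∈ Λs i, J x y ≠ 0 →
    ∫⁻ φ, ENNReal.ofReal |φ y| ∂(μ i) ≤ ENNReal.ofReal (D x * f (J x y))

lemma measurable_hb [Countable V] (Λ : Finset V) (x : V) :
    Measurable fun φ : V → ℝ => hb J Λ φ x := by
  unfold hb
  exact Measurable.tsum fun y => by fun_prop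

lemma ev_mem {Λs : ℕ → Finset V} (hmono : Monotone Λs) (hcover : ∀ x, ∃ i, x ∈ Λs i)
    (Δ : Finset V) : ∀ᶠ i in atTop, Δ ⊆ Λs i :=
  (tendsto_atTop_finset_of_monotone hmono hcover).eventually (eventually_ge_atTop Δ)

lemma tendsto_partial {Λs : ℕ → Finset V} (hmono : Monotone Λs) (hcover : ∀ x, ∃ i, x ∈ Λs i)
    (Λ : Finset V) (x : V) (φ : V → ℝ) (hs : Summable fun y => J x y * φ y) :
    Tendsto (fun N => Xf J Λ (Λs N) 0 φ x) atTop (nhds (hb J Λ φ x)) := by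
  have h1 : hb J Λ φ x = ∑' y, J x y * φ y - ∑ y ∈ Λ, J x y * φ y := by
    unfold hb
    have := hs.sum_add_tsum_subtype_compl Λ
    linarith
  rw [h1]
  have h2 : Tendsto (fun N => ∑ y ∈ Λs N, J x y * φ y - ∑ y ∈ Λ, J x y * φ y) atTop
      (nhds (∑' y, J x y * φ y - ∑ y ∈ Λ, J x y * φ y)) :=
    (hs.hasSum.comp (tendsto_atTop_finset_of_monotone hmono hcover)).sub_const _
  refine h2.congr' ?_
  filter_upwards [ev_mem hmono hcover Λ] with N hN
  unfold Xf
  rw [← Finset.sum_sdiff hN]; simp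

lemma SetupP.ae_summable [Countable V] (H : SetupP J f δf Mf β ρ lam) {Λs : ℕ → Finset V}
    (hmono : Monotone Λs)
    (hcover : ∀ x, ∃ i, x ∈ Λs i) {μ : ℕ → Measure (V → ℝ)} {ν : Measure (V → ℝ)}
    (hL : LocConv μ ν) (hμ : ∀ i, IsProbabilityMeasure (μ i)) [IsProbabilityMeasure ν]
    {D : V → ℝ} (hD : MomB J f Λs μ D) (x : V) :
    ∀ᵐ φ ∂ν, Summable fun y => J x y * φ y := by
  have hm : ∀ y, ∫⁻ φ : V → ℝ, ENNReal.ofReal |J x y * φ y| ∂ν ≤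
      ENNReal.ofReal (D x * (|J x y| * f (J x y))) := by
    intro y
    by_cases hJ : J x y = 0
    · simp [hJ]
    have h1 : ∫⁻ φ, ENNReal.ofReal |φ y| ∂ν ≤ ENNReal.ofReal (D x * f (J x y)) := by
      refine hL.moment hμ y _ (mul_nonneg (hD x).1 (by linarith [H.hf1 (J x y)])) ?_
      filter_upwards [(hD x).2, ev_mem hmono hcover {y}] with i hi hy
      exact hi y (hy (by simp)) hJ
    simp_rw [abs_mul, ENNReal.ofReal_mul (abs_nonneg _)]
    rw [lintegral_const_mul _ (by fun_prop)]
    calc _ ≤ ENNReal.ofReal |J x y| * ENNReal.ofReal (D x * f (J x y)) := by gcongr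
      _ = _ := by
        rw [← ENNReal.ofReal_mul (abs_nonneg _)]
        congr 1; ring
  have hsum : ∫⁻ φ : V → ℝ, ∑' y, ENNReal.ofReal |J x y * φ y| ∂ν ≠ ⊤ := by
    rw [lintegral_tsum (fun y => Measurable.aemeasurable (by fun_prop))]
    refine ne_of_lt (lt_of_le_of_lt (ENNReal.tsum_le_tsum hm) ?_)
    have hs : Summable fun y => D x * (|J x y| * f (J x y)) := (H.hJsum x).mul_left _
    rw [← ENNReal.ofReal_tsum_of_nonneg _ hs]
    · exact ENNReal.ofReal_lt_top
    · intro y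
      exact mul_nonneg (hD x).1 (mul_nonneg (abs_nonneg _) (by linarith [H.hf1 (J x y)]))
  filter_upwards [ae_lt_top (Measurable.tsum fun y => by fun_prop) hsum] with φ hφ
  have : Summable fun y => |J x y * φ y| := by
    have h3 := ENNReal.summable_toReal hφ.ne
    refine h3.congr fun y => ?_
    rw [ENNReal.toReal_ofReal (abs_nonneg _)]
  exact this.of_abs

/-- Tail of the interaction sum. -/
noncomputable def tailS (J : V → V → ℝ) (f : ℝ → ℝ) (S : Finset V) (x : V) : ℝ :=
  ∑' y, |J x y| * f (J x y) - ∑ y ∈ S, |J x y| * f (J x y)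

lemma SetupP.diff_bound (H : SetupP J f δf Mf β ρ lam) {Λs : ℕ → Finset V}
    (hmono : Monotone Λs) {μ : ℕ → Measure (V → ℝ)} (hμ : ∀ i, IsProbabilityMeasure (μ i))
    {D : V → ℝ} (Λ : Finset V) (x : V) (hD0 : 0 ≤ D x) (i N : ℕ) (hNi : N ≤ i)
    (hD : ∀ y ∈ Λs i, J x y ≠ 0 →
      ∫⁻ φ, ENNReal.ofReal |φ y| ∂(μ i) ≤ ENNReal.ofReal (D x * f (J x y))) (b : V → ℝ) :
    ∫⁻ φ, ENNReal.ofReal |Xf J Λ (Λs i) b φ x - Xf J Λ (Λs N) 0 φ x| ∂(μ i) ≤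
      ENNReal.ofReal (D x * tailS J f (Λs N) x + |b x|) := by
  have := hμ i
  have hsub : Λs N ⊆ Λs i := hmono hNi
  have hp : ∀ φ, |Xf J Λ (Λs i) b φ x - Xf J Λ (Λs N) 0 φ x| ≤
      ∑ y ∈ Λs i \ Λs N, |J x y| * |φ y| + |b x| := by
    intro φ
    have e : Xf J Λ (Λs i) b φ x - Xf J Λ (Λs N) 0 φ x =
        ∑ y ∈ (Λs i \ Λ) \ (Λs N \ Λ), J x y * φ y + b x := by
      unfold Xf
      rw [← Finset.sum_sdiff (Finset.sdiff_subset_sdiff hsub (Finset.Subset.refl Λ))]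
      simp only [Pi.zero_apply]; ring
    rw [e]
    refine (abs_add_le _ _).trans (add_le_add ?_ le_rfl)
    refine (Finset.abs_sum_le_sum_abs _ _).trans ?_
    simp_rw [abs_mul]
    refine Finset.sum_le_sum_of_subset_of_nonneg ?_ fun y _ _ => by positivity
    intro y
    simp only [Finset.mem_sdiff]
    tauto
  have htail : ∑ y ∈ Λs i \ Λs N, |J x y| * f (J x y) ≤ tailS J f (Λs N) x := by
    unfold tailS
    have h1 := (H.hJsum x).sum_le_tsum (Λs i)
      (fun y _ => mul_nonneg (abs_nonneg _) (by linarith [H.hf1 (J x y)]))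
    rw [← Finset.sum_sdiff hsub] at h1
    linarith
  have hf0 : ∀ y, 0 ≤ f (J x y) := fun y => by linarith [H.hf1 (J x y)]
  calc _ ≤ ∫⁻ φ : V → ℝ, (∑ y ∈ Λs i \ Λs N, ENNReal.ofReal |J x y| * ENNReal.ofReal |φ y|
        + ENNReal.ofReal |b x|) ∂(μ i) := by
        refine lintegral_mono fun φ => ?_
        refine (ENNReal.ofReal_le_ofReal (hp φ)).trans ?_
        rw [ENNReal.ofReal_add (Finset.sum_nonneg fun y _ => by positivity) (abs_nonneg _),
          ENNReal.ofReal_sum_of_nonneg fun y _ => by positivity]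
        simp_rw [ENNReal.ofReal_mul (abs_nonneg _)]
        exact le_rfl
    _ = ∑ y ∈ Λs i \ Λs N, ENNReal.ofReal |J x y| * ∫⁻ φ : V → ℝ, ENNReal.ofReal |φ y| ∂(μ i)
        + ENNReal.ofReal |b x| := by
        rw [lintegral_add_right _ measurable_const, lintegral_finsetSum _ (fun y _ => by fun_prop)]
        simp only [lintegral_const, measure_univ, mul_one]
        congr 1
        refine Finset.sum_congr rfl fun y _ => ?_
        rw [lintegral_const_mul _ (by fun_prop)]
    _ ≤ ∑ y ∈ Λs i \ Λs N, ENNReal.ofReal (D x * (|J x y| * f (J x y)))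
        + ENNReal.ofReal |b x| := by
        refine add_le_add (Finset.sum_le_sum fun y hy => ?_) le_rfl
        by_cases hJ : J x y = 0
        · simp [hJ]
        calc _ ≤ ENNReal.ofReal |J x y| * ENNReal.ofReal (D x * f (J x y)) := by
              gcongr; exact hD y (Finset.mem_sdiff.1 hy).1 hJ
          _ = _ := by
            rw [← ENNReal.ofReal_mul (abs_nonneg _)]
            congr 1; ring
    _ = ENNReal.ofReal (D x * ∑ y ∈ Λs i \ Λs N, |J x y| * f (J x y) + |b x|) := by
        have h0 : ∀ y ∈ Λs i \ Λs N, 0 ≤ D x * (|J x y| * f (J x y)) := fun y _ =>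
          mul_nonneg hD0 (mul_nonneg (abs_nonneg _) (hf0 y))
        rw [← ENNReal.ofReal_sum_of_nonneg h0, ← ENNReal.ofReal_add (Finset.sum_nonneg h0)
          (abs_nonneg _), ← Finset.mul_sum]
    _ ≤ _ := by
        refine ENNReal.ofReal_le_ofReal ?_
        have := mul_le_mul_of_nonneg_left htail hD0
        linarith

lemma measurable_rXf (Λ Λ' : Finset V) (b : V → ℝ) :
    Measurable fun φ => restrictTo Λ (Xf J Λ Λ' b φ) := by
  rw [measurable_pi_iff]; intro x; exact measurable_Xf Λ Λ' b x.1

lemma measurable_rhb [Countable V] (Λ : Finset V) :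
    Measurable fun φ : V → ℝ => restrictTo Λ (hb J Λ φ) := by
  rw [measurable_pi_iff]; intro x; exact measurable_hb Λ x.1

lemma dist_le_sum (Λ : Finset V) (u v : V → ℝ) :
    dist (restrictTo Λ u) (restrictTo Λ v) ≤ ∑ x ∈ Λ, |u x - v x| := by
  rw [dist_pi_le_iff (Finset.sum_nonneg fun _ _ => abs_nonneg _)]
  intro x
  rw [Real.dist_eq]
  exact Finset.single_le_sum (f := fun x => |u x - v x|) (fun _ _ => abs_nonneg _) x.2

lemma SetupP.field_diff (H : SetupP J f δf Mf β ρ lam) {Λs : ℕ → Finset V}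
    (hmono : Monotone Λs) {μ : ℕ → Measure (V → ℝ)} (hμ : ∀ i, IsProbabilityMeasure (μ i))
    {D : V → ℝ} (Λ : Finset V) (hD0 : ∀ x, 0 ≤ D x) (i N : ℕ) (hNi : N ≤ i)
    (hD : ∀ x ∈ Λ, ∀ y ∈ Λs i, J x y ≠ 0 →
      ∫⁻ φ, ENNReal.ofReal |φ y| ∂(μ i) ≤ ENNReal.ofReal (D x * f (J x y))) (b : V → ℝ)
    (F : (↥Λ → ℝ) → ℝ) (L : NNReal) (hF : LipschitzWith L F) (C : ℝ) (hC : ∀ u, |F u| ≤ C) :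
    |∫ φ, F (restrictTo Λ (Xf J Λ (Λs i) b φ)) ∂(μ i) -
      ∫ φ, F (restrictTo Λ (Xf J Λ (Λs N) 0 φ)) ∂(μ i)| ≤
      L * ∑ x ∈ Λ, (D x * tailS J f (Λs N) x + |b x|) := by
  have := hμ i
  have hFm := hF.continuous.measurable
  have i1 : ∀ Λ' b', Integrable (fun φ => F (restrictTo Λ (Xf J Λ Λ' b' φ))) (μ i) := fun Λ' b' =>
    Integrable.of_bound (hFm.comp (measurable_rXf Λ Λ' b')).aestronglyMeasurable C
      (ae_of_all _ fun φ => hC _)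
  rw [← integral_sub (i1 _ _) (i1 _ _), ← Real.norm_eq_abs]
  have ht : ∀ x, 0 ≤ tailS J f (Λs N) x := fun x => by
    unfold tailS
    have h1 := (H.hJsum x).sum_le_tsum (Λs N)
      (fun y _ => mul_nonneg (abs_nonneg _) (by linarith [H.hf1 (J x y)]))
    linarith
  have hn : ∀ x ∈ Λ, 0 ≤ D x * tailS J f (Λs N) x + |b x| := fun x _ =>
    add_nonneg (mul_nonneg (hD0 x) (ht x)) (abs_nonneg _)
  refine (norm_integral_le_lintegral_norm _).trans ?_
  refine ENNReal.toReal_le_of_le_ofReal (mul_nonneg L.2 (Finset.sum_nonneg hn)) ?_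
  calc _ ≤ ∫⁻ φ, ENNReal.ofReal L * ∑ x ∈ Λ,
        ENNReal.ofReal |Xf J Λ (Λs i) b φ x - Xf J Λ (Λs N) 0 φ x| ∂(μ i) := by
        refine lintegral_mono fun φ => ?_
        rw [← ENNReal.ofReal_sum_of_nonneg (fun _ _ => abs_nonneg _),
          ← ENNReal.ofReal_mul (NNReal.coe_nonneg L)]
        refine ENNReal.ofReal_le_ofReal ?_
        rw [Real.norm_eq_abs, ← Real.dist_eq]
        exact (hF.dist_le_mul _ _).trans
          (mul_le_mul_of_nonneg_left (dist_le_sum Λ _ _) L.2)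
    _ = ENNReal.ofReal L * ∑ x ∈ Λ,
        ∫⁻ φ, ENNReal.ofReal |Xf J Λ (Λs i) b φ x - Xf J Λ (Λs N) 0 φ x| ∂(μ i) := by
        have hmm : ∀ x, Measurable fun φ =>
            ENNReal.ofReal |Xf J Λ (Λs i) b φ x - Xf J Λ (Λs N) 0 φ x| := fun x =>
          ENNReal.measurable_ofReal.comp
            (continuous_abs.measurable.comp ((measurable_Xf _ _ _ x).sub (measurable_Xf _ _ _ x)))
        rw [lintegral_const_mul _ (Finset.measurable_sum _ fun x _ => hmm x),
          lintegral_finsetSum _ fun x _ => hmm x]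
    _ ≤ ENNReal.ofReal L * ∑ x ∈ Λ, ENNReal.ofReal (D x * tailS J f (Λs N) x + |b x|) := by
        gcongr with x hx
        exact H.diff_bound hmono hμ Λ x (hD0 x) i N hNi (hD x hx) b
    _ = _ := by
        rw [← ENNReal.ofReal_sum_of_nonneg hn, ← ENNReal.ofReal_mul (NNReal.coe_nonneg L)]

lemma SetupP.field_conv [Countable V] (H : SetupP J f δf Mf β ρ lam) {Λs : ℕ → Finset V}
    (hmono : Monotone Λs)
    (hcover : ∀ x, ∃ i, x ∈ Λs i) {μ : ℕ → Measure (V → ℝ)} {ν : Measure (V → ℝ)}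
    (hL : LocConv μ ν) (hμ : ∀ i, IsProbabilityMeasure (μ i)) [IsProbabilityMeasure ν]
    {D : V → ℝ} (hD : MomB J f Λs μ D) (b : ℕ → V → ℝ)
    (hb0 : ∀ x, Tendsto (fun i => b i x) atTop (nhds 0)) (Λ : Finset V)
    (F : (↥Λ → ℝ) → ℝ) (L : NNReal) (hF : LipschitzWith L F) (C : ℝ) (hC : ∀ u, |F u| ≤ C) :
    Tendsto (fun i => ∫ φ, F (restrictTo Λ (Xf J Λ (Λs i) (b i) φ)) ∂(μ i)) atTop
      (nhds (∫ φ, F (restrictTo Λ (hb J Λ φ)) ∂ν)) := by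
  have hFm := hF.continuous.measurable
  have hT : Tendsto (fun N => (L : ℝ) * ∑ x ∈ Λ, D x * tailS J f (Λs N) x) atTop (nhds 0) := by
    have : Tendsto (fun N => (L : ℝ) * ∑ x ∈ Λ, D x * tailS J f (Λs N) x) atTop
        (nhds ((L : ℝ) * ∑ x ∈ Λ, D x * 0)) := by
      refine Tendsto.const_mul _ (tendsto_finsetSum _ fun x _ => Tendsto.const_mul _ ?_)
      have h1 := ((H.hJsum x).hasSum.comp
        (tendsto_atTop_finset_of_monotone hmono hcover)).const_sub
          (∑' y, |J x y| * f (J x y))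
      rw [sub_self] at h1
      exact h1
    simpa using this
  have hB : Tendsto (fun i => (L : ℝ) * ∑ x ∈ Λ, |b i x|) atTop (nhds 0) := by
    have : Tendsto (fun i => (L : ℝ) * ∑ x ∈ Λ, |b i x|) atTop
        (nhds ((L : ℝ) * ∑ x ∈ Λ, |(0 : ℝ)|)) :=
      Tendsto.const_mul _ (tendsto_finsetSum _ fun x _ => (hb0 x).abs)
    simpa using this
  have hc : Tendsto (fun N => ∫ φ, F (restrictTo Λ (Xf J Λ (Λs N) 0 φ)) ∂ν) atTop
      (nhds (∫ φ, F (restrictTo Λ (hb J Λ φ)) ∂ν)) := by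
    refine tendsto_integral_of_dominated_convergence (fun _ => C)
      (fun N => (hFm.comp (measurable_rXf Λ _ _)).aestronglyMeasurable) (integrable_const C)
      (fun N => ae_of_all _ fun φ => hC _) ?_
    have : ∀ᵐ φ ∂ν, ∀ x, Summable fun y => J x y * φ y :=
      ae_all_iff.2 fun x => H.ae_summable hmono hcover hL hμ hD x
    filter_upwards [this] with φ hφ
    refine (hF.continuous.tendsto _).comp ?_
    rw [tendsto_pi_nhds]
    intro x
    exact tendsto_partial hmono hcover Λ x.1 φ (hφ x.1)
  have hN : ∀ N, Tendsto (fun i => ∫ φ, F (restrictTo Λ (Xf J Λ (Λs N) 0 φ)) ∂(μ i)) atTop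
      (nhds (∫ φ, F (restrictTo Λ (Xf J Λ (Λs N) 0 φ)) ∂ν)) := by
    intro N
    have := hL (Λs N) (fun ψ => F (restrictTo Λ (Xf J Λ (Λs N) 0 (ext0 (Λs N) ψ)))) (by
      refine hF.continuous.comp (continuous_pi fun x => ?_)
      unfold restrictTo Xf
      refine Continuous.add (continuous_finsetSum _ fun y _ => ?_) continuous_const
      exact continuous_const.mul (continuous_ext0 _ _)) ⟨C, fun ψ => hC _⟩
    have e : ∀ φ : V → ℝ, Xf J Λ (Λs N) 0 (ext0 (Λs N) (restrictTo (Λs N) φ)) =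
        Xf J Λ (Λs N) 0 φ := by
      intro φ
      funext x
      unfold Xf
      congr 1
      refine Finset.sum_congr rfl fun y hy => ?_
      rw [ext0_mem _ _ (Finset.mem_sdiff.1 hy).1, restrictTo]
    simpa only [e] using this
  rw [Metric.tendsto_nhds]
  intro ε hε
  have hε4 : 0 < ε / 4 := by linarith
  obtain ⟨N, h1, h2⟩ := ((Metric.tendsto_nhds.1 hT _ hε4).and (Metric.tendsto_nhds.1 hc _ hε4)).exists
  have hDall : ∀ᶠ i in atTop, ∀ x ∈ Λ, ∀ y ∈ Λs i, J x y ≠ 0 →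
      ∫⁻ φ, ENNReal.ofReal |φ y| ∂(μ i) ≤ ENNReal.ofReal (D x * f (J x y)) := by
    rw [Filter.eventually_all_finset]
    exact fun x _ => (hD x).2
  filter_upwards [Metric.tendsto_nhds.1 hB _ hε4, Metric.tendsto_nhds.1 (hN N) _ hε4, hDall,
    eventually_ge_atTop N] with i h3 h4 h5 h6
  have h7 := H.field_diff hmono hμ Λ (fun x => (hD x).1) i N h6 h5 (b i) F L hF C hC
  rw [Finset.sum_add_distrib, mul_add] at h7
  rw [Real.dist_eq] at *
  simp only [sub_zero] at h1 h3
  have := le_abs_self ((L : ℝ) * ∑ x ∈ Λ, D x * tailS J f (Λs N) x)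
  have := le_abs_self ((L : ℝ) * ∑ x ∈ Λ, |b i x|)
  rw [abs_lt] at *
  rw [abs_le] at h7
  constructor <;> linarith [h1.1, h1.2, h2.1, h2.2, h3.1, h3.2, h4.1, h4.2, h7.1, h7.2]

end


/-! ### The DLR equations and regularity in the limit (probability single-site measure) -/

section
variable {V : Type*} {J : V → V → ℝ} {f : ℝ → ℝ} {δf Mf β : ℝ} {ρ : Measure ℝ} {lam : ℝ}

lemma SetupP.field_conv_cont [Countable V] (H : SetupP J f δf Mf β ρ lam) {Λs : ℕ → Finset V}
    (hmono : Monotone Λs)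
    (hcover : ∀ x, ∃ i, x ∈ Λs i) {μ : ℕ → Measure (V → ℝ)} {ν : Measure (V → ℝ)}
    (hL : LocConv μ ν) (hμ : ∀ i, IsProbabilityMeasure (μ i)) [IsProbabilityMeasure ν]
    {D : V → ℝ} (hD : MomB J f Λs μ D) (b : ℕ → V → ℝ)
    (hb0 : ∀ x, Tendsto (fun i => b i x) atTop (nhds 0)) (Λ : Finset V)
    (F : (↥Λ → ℝ) → ℝ) (hF : Continuous F) (C : ℝ) (hC : ∀ u, |F u| ≤ C) :
    Tendsto (fun i => ∫ u, F u ∂((μ i).map fun φ => restrictTo Λ (Xf J Λ (Λs i) (b i) φ))) atTop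
      (nhds (∫ u, F u ∂(ν.map fun φ => restrictTo Λ (hb J Λ φ)))) := by
  let μs : ℕ → ProbabilityMeasure (↥Λ → ℝ) := fun i =>
    ⟨(μ i).map fun φ => restrictTo Λ (Xf J Λ (Λs i) (b i) φ), by
      have := hμ i
      exact Measure.isProbabilityMeasure_map (measurable_rXf Λ _ _).aemeasurable⟩
  let νs : ProbabilityMeasure (↥Λ → ℝ) :=
    ⟨ν.map fun φ => restrictTo Λ (hb J Λ φ),
      Measure.isProbabilityMeasure_map (measurable_rhb Λ).aemeasurable⟩
  have hw : Tendsto μs atTop (nhds νs) := by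
    rw [tendsto_iff_forall_lipschitz_integral_tendsto]
    rintro G ⟨C', hC'⟩ ⟨L, hGL⟩
    have hGm := hGL.continuous.measurable
    have hG : ∀ u, |G u| ≤ |G 0| + C' := by
      intro u
      have h1 := hC' u 0
      rw [Real.dist_eq] at h1
      have h2 := abs_sub_abs_le_abs_sub (G u) (G 0)
      linarith
    have := H.field_conv hmono hcover hL hμ hD b hb0 Λ G L hGL _ hG
    have e1 : ∀ i, ∫ u, G u ∂(μs i : Measure (↥Λ → ℝ)) =
        ∫ φ, G (restrictTo Λ (Xf J Λ (Λs i) (b i) φ)) ∂(μ i) := fun i =>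
      integral_map (measurable_rXf Λ _ _).aemeasurable hGm.aestronglyMeasurable
    have e2 : ∫ u, G u ∂(νs : Measure (↥Λ → ℝ)) = ∫ φ, G (restrictTo Λ (hb J Λ φ)) ∂ν :=
      integral_map (measurable_rhb Λ).aemeasurable hGm.aestronglyMeasurable
    rw [e2]
    simp_rw [e1]
    exact this
  rw [ProbabilityMeasure.tendsto_iff_forall_integral_tendsto] at hw
  exact hw (BoundedContinuousFunction.ofNormedAddCommGroup F hF C hC)

lemma SetupP.dlr [Countable V] (H : SetupP J f δf Mf β ρ lam) [IsProbabilityMeasure ρ]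
    {Λs : ℕ → Finset V} (hmono : Monotone Λs)
    (hcover : ∀ x, ∃ i, x ∈ Λs i) {ν : Measure (V → ℝ)} (b : ℕ → V → ℝ)
    (hL : LocConv (fun i => NU J β ρ (Λs i) (b i)) ν) [IsProbabilityMeasure ν]
    {D : V → ℝ} (hD : MomB J f Λs (fun i => NU J β ρ (Λs i) (b i)) D)
    (hb0 : ∀ x, Tendsto (fun i => b i x) atTop (nhds 0)) (Λ : Finset V) :
    ν.map (restrictTo Λ) = (ν.map fun φ => restrictTo Λ (hb J Λ φ)).bind (kap J β ρ Λ) := by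
  have hk := H.kap_markov Λ
  have hr := measurable_restrictTo Λ (V := V)
  have hμ : ∀ i, IsProbabilityMeasure (NU J β ρ (Λs i) (b i)) := fun i => H.NU_prob _ _
  have := Measure.isProbabilityMeasure_map (μ := ν) hr.aemeasurable
  have hp2 := Measure.isProbabilityMeasure_map (μ := ν) (measurable_rhb (J := J) Λ).aemeasurable
  refine ext_of_forall_integral_eq_of_IsFiniteMeasure fun g => ?_
  have hgC : ∀ u, |g u| ≤ ‖g‖ := fun u => g.norm_coe_le_norm u
  have hgm : Measurable g := g.continuous.measurable
  rw [integral_bind_kernel _ _ _ hgm _ hgC, integral_map hr.aemeasurable hgm.aestronglyMeasurable]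
  have h1 := hL Λ g g.continuous ⟨_, hgC⟩
  have h2 := H.field_conv_cont hmono hcover hL hμ hD b hb0 Λ _ (H.cont_kap Λ g hgm _ hgC) ‖g‖
    (fun u => by
      rw [← Real.norm_eq_abs]
      refine (norm_integral_le_of_norm_le_const (C := ‖g‖) (ae_of_all _ hgC)).trans ?_
      simp)
  refine tendsto_nhds_unique (h1.congr' ?_) h2
  filter_upwards [ev_mem hmono hcover Λ] with i hi
  have hp3 := Measure.isProbabilityMeasure_map (μ := NU J β ρ (Λs i) (b i))
    (measurable_rXf (J := J) Λ (Λs i) (b i)).aemeasurable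
  rw [← integral_bind_kernel _ _ _ hgm _ hgC, ← H.dlr_fin_bind hi,
    integral_map hr.aemeasurable hgm.aestronglyMeasurable]

lemma SetupP.isGibbs [Countable V] (H : SetupP J f δf Mf β ρ lam) [IsProbabilityMeasure ρ]
    {ν : Measure (V → ℝ)} [IsProbabilityMeasure ν]
    (h : ∀ Λ, ν.map (restrictTo Λ) =
      (ν.map fun φ => restrictTo Λ (hb J Λ φ)).bind (kap J β ρ Λ)) : IsGibbsMeasure J β ρ ν := by
  rintro Λ g hg ⟨C, hC⟩
  have hk := H.kap_markov Λ
  have hr := measurable_restrictTo Λ (V := V)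
  have hp2 := Measure.isProbabilityMeasure_map (μ := ν) (measurable_rhb (J := J) Λ).aemeasurable
  rw [← integral_map hr.aemeasurable hg.aestronglyMeasurable, h Λ,
    integral_bind_kernel _ _ _ hg _ hC,
    integral_map (measurable_rhb (J := J) Λ).aemeasurable
      (H.cont_kap Λ g hg C hC).measurable.aestronglyMeasurable]
  refine integral_congr_ae (ae_of_all _ fun η => ?_)
  simp only
  rw [gibbs_eq, kap_restrict]

lemma hb_tendsto {Λs : ℕ → Finset V} (hmono : Monotone Λs) (hcover : ∀ x, ∃ i, x ∈ Λs i)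
    (x : V) (ξ : V → ℝ) (hs : Summable fun y => J x y * ξ y) :
    Tendsto (fun i => hb J (Λs i) ξ x) atTop (nhds 0) := by
  have h1 : ∀ i, hb J (Λs i) ξ x = ∑' y, J x y * ξ y - ∑ y ∈ Λs i, J x y * ξ y := by
    intro i
    unfold hb
    have := hs.sum_add_tsum_subtype_compl (Λs i)
    linarith
  simp_rw [h1]
  have h2 := (hs.hasSum.comp
        (tendsto_atTop_finset_of_monotone hmono hcover)).const_sub (∑' y, J x y * ξ y)
  rw [sub_self] at h2
  exact h2

theorem main_prob [Countable V] (H : SetupP J f δf Mf β ρ lam) [IsProbabilityMeasure ρ]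
    (Λseq : ℕ → Finset V) (hmono : Monotone Λseq) (hcover : ∀ x : V, ∃ i, x ∈ Λseq i)
    (ξ : V → ℝ)
    (hξsum : ∀ x : V, Summable fun y => |J x y * ξ y|)
    (Amax : ℝ)
    (hA : ∀ (x : V) (C : ℝ), 1 ≤ C → ∀ ε : ℝ, 0 < ε → ∃ Λ₀ : Finset V,
      ∀ Λ : Finset V, Λ₀ ⊆ Λ → ARealL J f lam ξ C x (↑Λ) ≤ Amax + ε)
    (ν : Measure (V → ℝ)) [IsProbabilityMeasure ν]
    (hconv : ∀ (Λ' : Finset V) (g : (↥Λ' → ℝ) → ℝ), Continuous g →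
      (∃ K, ∀ ψ, |g ψ| ≤ K) →
      Tendsto (fun i => if h : Λ' ⊆ Λseq i then
          ∫ ψ, g ψ ∂(marg h (gibbs J β ρ (Λseq i) ξ)) else 0)
        atTop (nhds (∫ φ, g (restrictTo Λ' φ) ∂ν)))
    (a : ℝ) (ha : 2 * β * Mf * lam ≤ a) :
    IsRegularWRT (rhoMod ρ a) ν ∧ IsGibbsMeasure J β ρ ν := by
  obtain ⟨M, K0, hC⟩ := H.cst
  set K := max K0 (Amax + 2) with hK
  have hK0 : K0 ≤ K := le_max_left _ _
  have hKA : Amax + 1 + 1 ≤ K := by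
    have : Amax + 2 ≤ K := le_max_right _ _
    linarith
  have hK1 : 1 ≤ K := hC.hK1.trans hK0
  have hlam := H.hlam
  have hL : LocConv (fun i => NU J β ρ (Λseq i) (hb J (Λseq i) ξ)) ν := by
    intro Δ g hg hgb
    refine (hconv Δ g hg hgb).congr' ?_
    filter_upwards [ev_mem hmono hcover Δ] with i hi
    rw [dif_pos hi, marg_gibbs, integral_map (measurable_restrictTo Δ).aemeasurable
      hg.measurable.aestronglyMeasurable]
  have hAe : ∀ x, ∀ᶠ i in atTop, ARealL J f lam ξ 1 x (Λseq i : Set V) ≤ Amax + 1 := by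
    intro x
    obtain ⟨Λ₀, h⟩ := hA x 1 le_rfl 1 one_pos
    filter_upwards [ev_mem hmono hcover Λ₀] with i hi
    exact h _ hi
  have hF : ∀ Δ : Finset V, ∀ᶠ i in atTop, Fld J f lam ξ (Λseq i) Δ K := by
    intro Δ
    have : ∀ᶠ i in atTop, ∀ x ∈ Δ, ARealL J f lam ξ 1 x (Λseq i : Set V) ≤ Amax + 1 := by
      rw [Filter.eventually_all_finset]
      exact fun x _ => hAe x
    filter_upwards [this, ev_mem hmono hcover Δ] with i h1 h2
    exact H.fld_of_A ξ _ _ h2 _ _ h1 hKA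
  constructor
  · obtain ⟨B, hB, hreg⟩ := H.reg hC a ha K hK0
    refine ⟨B, hB, fun Δ => ?_⟩
    have ha0 : 0 ≤ a := H.a0_nonneg.trans ha
    have hfin : IsFiniteMeasure (rhoMod ρ a) := isFiniteMeasure_withDensity (H.Za_fin a ha0)
    have hne : (Measure.pi fun _ : ↥Δ => rhoMod ρ a) Set.univ ≠ 0 := by
      rw [Measure.pi_univ]
      refine Finset.prod_ne_zero_iff.2 fun _ _ => ?_
      unfold rhoMod
      rw [withDensity_apply _ MeasurableSet.univ, setLIntegral_univ]
      exact (lt_of_lt_of_le one_pos (H.one_le_Za a ha0)).ne'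
    have hP : IsFiniteMeasure (ENNReal.ofReal (Real.exp (B * Δ.card)) • prodN (rhoMod ρ a) Δ) := by
      constructor
      unfold prodN
      rw [Measure.smul_apply, Measure.smul_apply, smul_eq_mul, smul_eq_mul]
      exact ENNReal.mul_lt_top ENNReal.ofReal_lt_top
        (ENNReal.mul_lt_top (ENNReal.inv_lt_top.2 (pos_iff_ne_zero.2 hne)) (measure_lt_top _ _))
    refine hL.le Δ _ ?_
    filter_upwards [hF Δ, ev_mem hmono hcover Δ] with i h1 h2
    exact hreg ξ _ _ h2 h1
  · obtain ⟨C1, hC1, hmom⟩ := H.moment hC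
    have hD : MomB J f Λseq (fun i => NU J β ρ (Λseq i) (hb J (Λseq i) ξ))
        (fun _ => lam * K + C1) := by
      intro x
      refine ⟨by positivity, ?_⟩
      filter_upwards [hF {x}] with i hi y hy hJ
      have hf1 := H.hf1 (J x y)
      have h1 : K ≤ lam * f (J x y) * K := by
        have : 1 ≤ lam * f (J x y) := by nlinarith
        nlinarith
      refine (hmom ξ (Λseq i) y _ hy (hK0.trans h1) (hi.neighbor hy hJ)).trans ?_
      refine ENNReal.ofReal_le_ofReal ?_
      nlinarith
    exact H.isGibbs fun Λ => H.dlr hmono hcover _ hL hD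
      (fun x => hb_tendsto hmono hcover x ξ (hξsum x).of_abs) Λ

end


/-! ### Reduction to a probability single-site measure -/

section
variable {V : Type*}

lemma pi_smul_const (Λ : Finset V) (ρ : Measure ℝ) [IsFiniteMeasure ρ] (r : ℝ≥0∞) (hr : r ≠ ⊤) :
    (Measure.pi fun _ : ↥Λ => r • ρ) = r ^ Λ.card • Measure.pi fun _ : ↥Λ => ρ := by
  have : IsFiniteMeasure (r • ρ) := Measure.smul_finite ρ hr
  refine Measure.pi_eq fun s hs => ?_
  simp [Measure.smul_apply, Measure.pi_pi, Finset.prod_mul_distrib]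

lemma normalize_smul {α : Type*} [MeasurableSpace α] (m : Measure α) (c : ℝ≥0∞) (h0 : c ≠ 0)
    (ht : c ≠ ⊤) : ((c • m) Set.univ)⁻¹ • (c • m) = (m Set.univ)⁻¹ • m := by
  rw [Measure.smul_apply, smul_eq_mul, ENNReal.mul_inv (Or.inl h0) (Or.inl ht), smul_smul]
  congr 1
  rw [mul_comm c⁻¹, mul_assoc, ENNReal.inv_mul_cancel h0 ht, mul_one]

lemma gibbs_smul (J : V → V → ℝ) (β : ℝ) (ρ : Measure ℝ) [IsFiniteMeasure ρ] (r : ℝ≥0∞)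
    (h0 : r ≠ 0) (hr : r ≠ ⊤) (Λ : Finset V) (ξ : V → ℝ) :
    gibbs J β (r • ρ) Λ ξ = gibbs J β ρ Λ ξ := by
  unfold gibbs
  rw [pi_smul_const Λ ρ r hr, withDensity_smul_measure,
    normalize_smul _ _ (pow_ne_zero _ h0) (ENNReal.pow_ne_top hr)]

lemma prodN_smul (ρ : Measure ℝ) [IsFiniteMeasure ρ] (r : ℝ≥0∞)
    (h0 : r ≠ 0) (hr : r ≠ ⊤) (Λ : Finset V) :
    prodN (r • ρ) Λ = prodN ρ Λ := by
  unfold prodN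
  rw [pi_smul_const Λ ρ r hr, normalize_smul _ _ (pow_ne_zero _ h0) (ENNReal.pow_ne_top hr)]

lemma rhoMod_smul (ρ : Measure ℝ) (r : ℝ≥0∞) (a : ℝ) : rhoMod (r • ρ) a = r • rhoMod ρ a := by
  unfold rhoMod
  rw [withDensity_smul_measure]

end

/-- Corollary `prop: limit of finite n=2`: limits of finite-volume
measures with tempered boundary conditions are regular Gibbs measures. -/
theorem stmt12 {V : Type*} [Countable V] (J : V → V → ℝ) (f : ℝ → ℝ)
    (δf Mf : ℝ) (hδf : 0 < δf) (hMf : 0 < Mf)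
    (hJsymm : ∀ x y, J x y = J y x)
    (hf1 : ∀ t, 1 ≤ f t)
    (hflog : ∀ t : ℝ, t ≠ 0 → |t| < δf → (Real.log (|t|⁻¹)) ^ ((1 : ℝ) / 2) ≤ f t)
    (hJsum : ∀ x, Summable fun y => |J x y| * f (J x y))
    (hJbound : ∀ x, ∑' y, |J x y| * f (J x y) ≤ Mf)
    (β : ℝ) (hβ : 0 ≤ β) (ρ : Measure ℝ)
    (hρ : ∀ a : ℝ, 0 < a →
      0 < ∫⁻ u, ENNReal.ofReal (Real.exp (a * u ^ 2)) ∂ρ ∧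
      ∫⁻ u, ENNReal.ofReal (Real.exp (a * u ^ 2)) ∂ρ < ⊤)
    (Λseq : ℕ → Finset V) (hmono : Monotone Λseq) (hcover : ∀ x : V, ∃ i, x ∈ Λseq i)
    (lam : ℝ) (hlam : 1 ≤ lam) (ξ : V → ℝ)
    (hξsum : ∀ x : V, Summable fun y => |J x y * ξ y|)
    (Amax : ℝ) (hAmax : 1 ≤ Amax)
    (hA : ∀ (x : V) (C : ℝ), 1 ≤ C → ∀ ε : ℝ, 0 < ε → ∃ Λ₀ : Finset V,
      ∀ Λ : Finset V, Λ₀ ⊆ Λ → ARealL J f lam ξ C x (↑Λ) ≤ Amax + ε)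
    (ν : Measure (V → ℝ)) [IsProbabilityMeasure ν]
    (hconv : ∀ (Λ' : Finset V) (g : (↥Λ' → ℝ) → ℝ), Continuous g →
      (∃ K, ∀ ψ, |g ψ| ≤ K) →
      Tendsto (fun i => if h : Λ' ⊆ Λseq i then
          ∫ ψ, g ψ ∂(marg h (gibbs J β ρ (Λseq i) ξ)) else 0)
        atTop (nhds (∫ φ, g (restrictTo Λ' φ) ∂ν)))
    (a : ℝ) (ha : 2 * β * Mf * lam ≤ a) :
    IsRegularWRT (rhoMod ρ a) ν ∧ IsGibbsMeasure J β ρ ν := by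

  have hge : ∀ u : ℝ, (1 : ℝ≥0∞) ≤ ENNReal.ofReal (Real.exp (1 * u ^ 2)) := fun u => by
    rw [← ENNReal.ofReal_one]
    exact ENNReal.ofReal_le_ofReal (Real.one_le_exp (by positivity))
  have hfin : IsFiniteMeasure ρ := by
    constructor
    calc ρ Set.univ = ∫⁻ _u, 1 ∂ρ := by simp
      _ ≤ ∫⁻ u, ENNReal.ofReal (Real.exp (1 * u ^ 2)) ∂ρ := lintegral_mono hge
      _ < ⊤ := (hρ 1 one_pos).2
  have hne : ρ Set.univ ≠ 0 := by
    intro h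
    have h0 : ρ = 0 := Measure.measure_univ_eq_zero.1 h
    have := (hρ 1 one_pos).1
    simp [h0] at this
  set r := (ρ Set.univ)⁻¹ with hr
  have hr0 : r ≠ 0 := ENNReal.inv_ne_zero.2 (measure_ne_top _ _)
  have hrt : r ≠ ⊤ := ENNReal.inv_ne_top.2 hne
  have hprob : IsProbabilityMeasure (r • ρ) := by
    constructor
    rw [Measure.smul_apply, smul_eq_mul]
    exact ENNReal.inv_mul_cancel hne (measure_ne_top _ _)
  have H : SetupP J f δf Mf β (r • ρ) lam :=
    { hδf := hδf, hMf := hMf, hJsymm := hJsymm, hf1 := hf1, hflog := hflog, hJsum := hJsum,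
      hJbound := hJbound, hβ := hβ, prob := hprob, hlam := hlam
      hρ := fun b hb => by
        rw [lintegral_smul_measure, smul_eq_mul]
        exact ENNReal.mul_lt_top hrt.lt_top (hρ b hb).2 }
  have hg : ∀ (Λ : Finset V) (η : V → ℝ), gibbs J β (r • ρ) Λ η = gibbs J β ρ Λ η :=
    fun Λ η => gibbs_smul J β ρ r hr0 hrt Λ η
  have main := main_prob H Λseq hmono hcover ξ hξsum Amax hA ν
    (by simpa only [hg] using hconv) a ha
  have ha0 : 0 ≤ a := H.a0_nonneg.trans ha
  have hfa : IsFiniteMeasure (rhoMod ρ a) := by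
    refine isFiniteMeasure_withDensity ?_
    rcases ha0.eq_or_lt with h | h
    · rw [← h]; simp
    · exact (hρ a h).2.ne
  constructor
  · obtain ⟨B, hB, h⟩ := main.1
    refine ⟨B, hB, fun Λ => ?_⟩
    have := h Λ
    rwa [rhoMod_smul, prodN_smul _ r hr0 hrt] at this
  · intro Λ g hgm hgb
    have := main.2 Λ g hgm hgb
    simpa only [hg] using this
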